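/- Assume G ∈ C²(Ω × Y × ℝ) satisfies (Reg), (Mono), (Twist), (Gen_Ω) and (Gen_∂X), that X ⊆ Ω is compact, that ρ is a continuous probability density supported in X, and that int(X) ∩ {ρ > 0} is path-connected. Let ψ ∈ ℝ^N satisfy Hᵢ(ψ) > 0 for every i. Then: (1) the differential DH(ψ) has rank N − 1; (2) im(DH(ψ)) = 𝟙^⊥ = {v ∈ ℝ^N : Σᵢ vᵢ = 0}, where 𝟙 = (1,…,1); (3) every nonzero w ∈ ker(DH(ψ)) satisfies wᵢ ≠ 0 for all i ∈ {1,…,N}, and all the wᵢ have the same sign. -/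

import Mathlib

set_option autoImplicit false

open MeasureTheory Set

noncomputable section

variable {d N : ℕ}

/-- Generalized Laguerre cell associated to `ψ` and index `i`. -/
def Lag (Ω : Set (EuclideanSpace ℝ (Fin d))) (G : EuclideanSpace ℝ (Fin d) → Fin N → ℝ → ℝ)
    (ψ : Fin N → ℝ) (i : Fin N) : Set (EuclideanSpace ℝ (Fin d)) :=
  {x ∈ Ω | ∀ j, G x j (ψ j) ≤ G x i (ψ i)}

/-- Interface `Γᵢⱼ(ψ)` between two cells. -/
def Gam (Ω : Set (EuclideanSpace ℝ (Fin d))) (G : EuclideanSpace ℝ (Fin d) → Fin N → ℝ → ℝ)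
    (ψ : Fin N → ℝ) (i j : Fin N) : Set (EuclideanSpace ℝ (Fin d)) :=
  {x ∈ Ω | G x i (ψ i) = G x j (ψ j)}

/-- The mass function `H(ψ) = (μ(Lagᵢ(ψ)))ᵢ` where `μ` has density `ρ`. -/
def Hfun (Ω : Set (EuclideanSpace ℝ (Fin d))) (G : EuclideanSpace ℝ (Fin d) → Fin N → ℝ → ℝ)
    (ρ : EuclideanSpace ℝ (Fin d) → ℝ) (ψ : Fin N → ℝ) : Fin N → ℝ :=
  fun i => ((volume.withDensity fun x => ENNReal.ofReal (ρ x)) (Lag Ω G ψ i)).toReal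


section
open Filter Topology

/-- Linear algebra of irreducible Laplacian-type maps. -/
lemma laplacian_linalg (M : (Fin N → ℝ) →ₗ[ℝ] (Fin N → ℝ))
    (hsum : ∀ w, ∑ i, M w i = 0)
    (hoff : ∀ i j, i ≠ j → 0 ≤ M (Pi.single j 1) i)
    (hirr : ∀ S : Set (Fin N), S.Nonempty → Sᶜ.Nonempty →
      ∃ j ∈ S, ∃ i ∈ Sᶜ, 0 < M (Pi.single j 1) i) (hN : 1 ≤ N) :
    Module.finrank ℝ (LinearMap.range M) = N - 1 ∧
    ((LinearMap.range M : Submodule ℝ (Fin N → ℝ)) : Set (Fin N → ℝ))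
      = {v : Fin N → ℝ | ∑ i, v i = 0} ∧
    (∀ w : Fin N → ℝ, w ≠ 0 → M w = 0 →
      (∀ i, w i ≠ 0) ∧ ((∀ i, 0 < w i) ∨ (∀ i, w i < 0))) := by
  classical
  have hexp : ∀ w i, M w i = ∑ j, w j * M (Pi.single j 1) i := by
    intro w i
    have : w = ∑ j, w j • (Pi.single j (1:ℝ) : Fin N → ℝ) := by
      ext k; simp [Finset.sum_apply, Pi.single_apply]
    conv_lhs => rw [this]
    simp [Finset.sum_apply]
  have key : ∀ w, M w = 0 → (∃ i, 0 < w i) → ∀ i, 0 < w i := by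
    intro w hw hex
    by_contra hcon
    push Not at hcon
    obtain ⟨j, hj, i, hi, hpos⟩ := hirr {i | 0 < w i} hex (by
      obtain ⟨i, hi⟩ := hcon; exact ⟨i, by simpa using hi⟩)
    have hi' : ¬ 0 < w i := hi
    have h1 : ∑ k ∈ Finset.univ.filter (fun k => ¬ 0 < w k), ∑ l, w l * M (Pi.single l 1) k = 0 := by
      apply Finset.sum_eq_zero
      intro k _
      rw [← hexp, hw]; rfl
    rw [Finset.sum_comm] at h1
    have hterm : ∀ l, 0 ≤ ∑ k ∈ Finset.univ.filter (fun k => ¬ 0 < w k), w l * M (Pi.single l 1) k := by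
      intro l
      by_cases hl : 0 < w l
      · apply Finset.sum_nonneg
        intro k hk
        have hk' : ¬ 0 < w k := by simpa using hk
        refine mul_nonneg hl.le (hoff k l ?_)
        rintro rfl; exact hk' hl
      · rw [← Finset.mul_sum]
        apply mul_nonneg_of_nonpos_of_nonpos (not_lt.1 hl)
        have := hsum (Pi.single l 1)
        rw [← Finset.sum_filter_add_sum_filter_not Finset.univ (fun k => 0 < w k)] at this
        have h2 : 0 ≤ ∑ k ∈ Finset.univ.filter (fun k => 0 < w k), M (Pi.single l 1) k := by
          apply Finset.sum_nonneg
          intro k hk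
          have hk' : 0 < w k := by simpa using hk
          apply hoff
          rintro rfl; exact hl hk'
        linarith
    have h3 := (Finset.sum_eq_zero_iff_of_nonneg (fun l _ => hterm l)).1 h1 j (Finset.mem_univ _)
    have h4 : ∀ k ∈ Finset.univ.filter (fun k => ¬ 0 < w k), 0 ≤ w j * M (Pi.single j 1) k := by
      intro k hk
      have hk' : ¬ 0 < w k := by simpa using hk
      have hj' : 0 < w j := hj
      refine mul_nonneg hj'.le (hoff k j ?_)
      rintro rfl; exact hk' hj
    have h5 := (Finset.sum_eq_zero_iff_of_nonneg h4).1 h3 i (by simpa using hi')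
    have : 0 < w j * M (Pi.single j 1) i := mul_pos hj hpos
    linarith
  have key2 : ∀ w : Fin N → ℝ, w ≠ 0 → M w = 0 →
      (∀ i, w i ≠ 0) ∧ ((∀ i, 0 < w i) ∨ (∀ i, w i < 0)) := by
    intro w hw0 hw
    have : ∃ i, w i ≠ 0 := by
      by_contra hcon; push Not at hcon; exact hw0 (funext hcon)
    obtain ⟨i, hi⟩ := this
    rcases lt_or_gt_of_ne hi with h | h
    · have := key (-w) (by rw [map_neg, hw, neg_zero]) ⟨i, by simpa using h⟩
      have h' : ∀ i, w i < 0 := fun k => by simpa using this k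
      exact ⟨fun k => (h' k).ne, Or.inr h'⟩
    · have h' := key w hw ⟨i, h⟩
      exact ⟨fun k => (h' k).ne', Or.inl h'⟩
  have i0 : Fin N := ⟨0, hN⟩
  have hker : Module.finrank ℝ (LinearMap.ker M) ≤ 1 := by
    rw [← Module.finrank_self ℝ]
    let f : LinearMap.ker M →ₗ[ℝ] ℝ := (LinearMap.proj i0).comp (LinearMap.ker M).subtype
    apply LinearMap.finrank_le_finrank_of_injective (f := f)
    rw [← LinearMap.ker_eq_bot, LinearMap.ker_eq_bot']
    rintro ⟨w, hw⟩ h0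
    by_contra hne
    exact (key2 w (fun h => hne (by simpa using h)) hw).1 i0 h0
  let σ : (Fin N → ℝ) →ₗ[ℝ] ℝ := ∑ i, LinearMap.proj i
  have hσ : ∀ w, σ w = ∑ i, w i := by intro w; simp [σ]
  have hle : LinearMap.range M ≤ LinearMap.ker σ := by
    rintro _ ⟨w, rfl⟩
    simp only [LinearMap.mem_ker]
    rw [hσ]; exact hsum w
  have hrn := LinearMap.finrank_range_add_finrank_ker M
  have hrσ := LinearMap.finrank_range_add_finrank_ker σ
  have hσs : LinearMap.range σ = ⊤ := by
    rw [LinearMap.range_eq_top]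
    intro r
    exact ⟨Pi.single i0 r, by rw [hσ]; simp⟩
  rw [hσs, finrank_top, Module.finrank_self] at hrσ
  simp only [Module.finrank_fintype_fun_eq_card, Fintype.card_fin] at hrn hrσ
  have hle' := Submodule.finrank_mono hle
  have heq : LinearMap.range M = LinearMap.ker σ :=
    Submodule.eq_of_le_of_finrank_eq hle (by omega)
  refine ⟨by omega, ?_, key2⟩
  rw [heq]
  ext v
  simp only [SetLike.mem_coe, LinearMap.mem_ker, mem_ofPred_eq, hσ]

/-- Differentiation under the integral sign. -/
lemma diff_integral {T : Type*} [MeasurableSpace T] (ν : Measure T)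
    (φ : (Fin N → ℝ) → T → ℝ) (ψ : Fin N → ℝ) (s : Set (Fin N → ℝ)) (hs : s ∈ 𝓝 ψ)
    (hm : ∀ p, AEStronglyMeasurable (φ p) ν) (hi : Integrable (φ ψ) ν)
    (bound : T → ℝ) (hb : Integrable bound ν)
    (hl : ∀ a, ∀ p ∈ s, ‖φ p a - φ ψ a‖ ≤ bound a * ‖p - ψ‖)
    (hd : ∀ᵐ a ∂ν, DifferentiableAt ℝ (fun p => φ p a) ψ) :
    DifferentiableAt ℝ (fun p => ∫ a, φ p a ∂ν) ψ := by
  let F' : T → (Fin N → ℝ) →L[ℝ] ℝ := fun a => fderiv ℝ (fun p => φ p a) ψ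
  have hF' : AEStronglyMeasurable F' ν := by
    have h1 : ∀ a, F' a = ∑ j, (F' a (Pi.single j 1)) •
        (ContinuousLinearMap.proj (R := ℝ) (φ := fun _ : Fin N => ℝ) j) := by
      intro a
      ext w
      have : w = ∑ j, w j • (Pi.single j (1:ℝ) : Fin N → ℝ) := by
        ext k; simp [Finset.sum_apply, Pi.single_apply]
      conv_lhs => rw [this]
      simp [mul_comm]
    have h2 : ∀ v, AEStronglyMeasurable (fun a => F' a v) ν := by
      intro v
      apply aestronglyMeasurable_of_tendsto_ae atTop
        (f := fun (n : ℕ) a => ((n:ℝ)) • (φ (ψ + ((n:ℝ))⁻¹ • v) a - φ ψ a))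
      · intro n
        exact ((hm (ψ + ((n:ℝ))⁻¹ • v)).sub (hm ψ)).const_smul (n:ℝ)
      · filter_upwards [hd] with a ha
        exact ha.hasFDerivAt.lim v (c := fun n : ℕ => (n:ℝ)) (l := atTop)
          (tendsto_norm_atTop_atTop.comp tendsto_natCast_atTop_atTop)
    have h3 : F' = fun a => ∑ j, (F' a (Pi.single j 1)) •
        (ContinuousLinearMap.proj (R := ℝ) (φ := fun _ : Fin N => ℝ) j) := funext h1
    rw [h3]
    apply Finset.aestronglyMeasurable_fun_sum
    intro j _
    exact (h2 _).smul_const _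
  exact (hasFDerivAt_integral_of_dominated_loc_of_lip' hs (fun p _ => hm p) hi hF'
    (Eventually.of_forall hl) hb
    (by filter_upwards [hd] with a ha using ha.hasFDerivAt)).2.differentiableAt

/-- Localisation by partitions of unity. -/
lemma diff_local {T : Type*} [TopologicalSpace T] [T2Space T] [LocallyCompactSpace T]
    [MeasurableSpace T] [OpensMeasurableSpace T] (ν : Measure T) [IsFiniteMeasureOnCompacts ν]
    (S : (Fin N → ℝ) → Set T) (ψ : Fin N → ℝ)
    (h : T → ℝ) (hc : Continuous h) (hcs : HasCompactSupport h)
    (hloc : ∀ t ∈ tsupport h, ∃ U, IsOpen U ∧ t ∈ U ∧ ∀ h' : T → ℝ, Continuous h' →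
      HasCompactSupport h' → tsupport h' ⊆ U →
      DifferentiableAt ℝ (fun p => ∫ x in S p, h' x ∂ν) ψ) :
    DifferentiableAt ℝ (fun p => ∫ x in S p, h x ∂ν) ψ := by
  classical
  choose! U hUo hUt hU using hloc
  obtain ⟨s, hs, hcov⟩ := hcs.isCompact.elim_nhds_subcover U
    (fun t ht => (hUo t ht).mem_nhds (hUt t ht))
  let e := s.equivFin
  obtain ⟨f, hf1, hf2, hf3, hf4⟩ := exists_continuous_sum_one_of_isOpen_isCompact
    (s := fun i : Fin s.card => U (e.symm i)) (fun i => hUo _ (hs _ (e.symm i).2)) hcs.isCompact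
    (by
      intro x hx
      obtain ⟨t, ht, hxt⟩ := mem_iUnion₂.1 (hcov hx)
      exact mem_iUnion.2 ⟨e ⟨t, ht⟩, by simpa using hxt⟩)
  have hsum : ∀ x, h x = ∑ i, f i x * h x := by
    intro x
    by_cases hx : x ∈ tsupport h
    · have := hf2 hx
      simp only [ContinuousMap.coe_sum, Finset.sum_apply, Pi.one_apply] at this
      rw [← Finset.sum_mul, this, one_mul]
    · simp [image_eq_zero_of_notMem_tsupport hx]
  have hcs' : ∀ i, HasCompactSupport (fun x => f i x * h x) := fun i => hcs.mul_left
  have hc' : ∀ i, Continuous (fun x => f i x * h x) := fun i => (f i).continuous.mul hc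
  have : (fun p => ∫ x in S p, h x ∂ν) = fun p => ∑ i, ∫ x in S p, f i x * h x ∂ν := by
    ext p
    rw [← integral_finsetSum]
    · exact integral_congr_ae (Eventually.of_forall hsum)
    · intro i _
      exact ((hc' i).integrable_of_hasCompactSupport (hcs' i)).integrableOn
  rw [this]
  apply DifferentiableAt.fun_sum
  intro i _
  apply hU (e.symm i) (hs _ (e.symm i).2) _ (hc' i) (hcs' i)
  refine (closure_mono ?_).trans (hf1 i)
  exact Function.support_mul_subset_left _ _

lemma setInt_eq {T : Type*} [MeasurableSpace T] (ν : Measure T) (S A U : Set T)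
    (hS : MeasurableSet S) (hA : MeasurableSet A) (h : T → ℝ) (hsupp : ∀ x, x ∉ U → h x = 0)
    (hSA : ∀ x ∈ U, x ∈ S ↔ x ∈ A) : ∫ x in S, h x ∂ν = ∫ x in A, h x ∂ν := by
  rw [← integral_indicator hS, ← integral_indicator hA]
  congr 1
  ext x
  by_cases hx : x ∈ U
  · by_cases hxS : x ∈ S
    · rw [indicator_of_mem hxS, indicator_of_mem ((hSA x hx).1 hxS)]
    · rw [indicator_of_notMem hxS, indicator_of_notMem (fun h => hxS ((hSA x hx).2 h))]
  · have := hsupp x hx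
    rw [indicator_apply_eq_zero.2 (fun _ => this), indicator_apply_eq_zero.2 (fun _ => this)]

lemma hasDerivAt_Iic (h : ℝ → ℝ) (hc : Continuous h) (hcs : HasCompactSupport h) (b : ℝ) :
    DifferentiableAt ℝ (fun s => ∫ t in Iic s, h t) b := by
  have hi := hc.integrable_of_hasCompactSupport hcs (μ := volume)
  have : (fun s => ∫ t in Iic s, h t) = fun s => (∫ t in Iic (0:ℝ), h t) + ∫ t in (0:ℝ)..s, h t := by
    ext s
    rw [← intervalIntegral.integral_Iic_sub_Iic hi.integrableOn hi.integrableOn]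
    ring
  rw [this]
  exact (hc.integral_hasStrictDerivAt 0 b).hasDerivAt.differentiableAt.const_add _

lemma hasDerivAt_Ici (h : ℝ → ℝ) (hc : Continuous h) (hcs : HasCompactSupport h) (b : ℝ) :
    DifferentiableAt ℝ (fun s => ∫ t in Ici s, h t) b := by
  have hi := hc.integrable_of_hasCompactSupport hcs (μ := volume)
  have : (fun s => ∫ t in Ici s, h t) = fun s => (∫ t, h t) - ∫ t in Iic s, h t := by
    ext s
    rw [integral_Ici_eq_integral_Ioi, ← integral_add_compl (measurableSet_Iic (a := s)) hi,
      compl_Iic]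
    ring
  rw [this]
  exact (hasDerivAt_Iic h hc hcs b).const_sub _

lemma implicit_pos (f : (Fin N → ℝ) × ℝ → ℝ) (ψ : Fin N → ℝ) (t0 : ℝ)
    (hf : ContDiffAt ℝ 1 f (ψ, t0)) (h0 : f (ψ, t0) = 0) (hpos : 0 < fderiv ℝ f (ψ, t0) (0, 1)) :
    ∃ U, IsOpen U ∧ t0 ∈ U ∧ ∃ τ : (Fin N → ℝ) → ℝ, DifferentiableAt ℝ τ ψ ∧
      ∀ᶠ p in 𝓝 ψ, ∀ t ∈ U, (τ p < t → 0 < f (p, t)) ∧ (t < τ p → f (p, t) < 0) ∧ 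
        (t = τ p → f (p, t) = 0) := by
  have hs := hf.hasStrictFDerivAt (by norm_num)
  have hinv : ((fderiv ℝ f (ψ, t0)) ∘L .inr ℝ (Fin N → ℝ) ℝ).IsInvertible := by
    refine ⟨ContinuousLinearEquiv.smulLeft (Units.mk0 _ hpos.ne'), ?_⟩
    ext
    simp [Units.smul_def]
  set τ := hs.implicitFunctionOfProdDomain hinv
  have h1 := hs.eventually_apply_implicitFunctionOfProdDomain hinv
  have h2 := hs.tendsto_implicitFunctionOfProdDomain hinv
  have h3 := (hs.hasStrictFDerivAt_implicitFunctionOfProdDomain hinv).hasFDerivAt.differentiableAt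
  have hev : ∀ᶠ q in 𝓝 (ψ, t0), DifferentiableAt ℝ f q ∧ 0 < fderiv ℝ f q (0, 1) := by
    have hA : ∀ᶠ q in 𝓝 (ψ, t0), ContDiffAt ℝ 1 f q := hf.eventually (by simp)
    have hB : ContinuousAt (fun q => fderiv ℝ f q (0, 1)) (ψ, t0) :=
      (hf.continuousAt_fderiv (by norm_num)).clm_apply continuousAt_const
    filter_upwards [hA, hB.eventually (lt_mem_nhds hpos)] with q hq hq'
    exact ⟨hq.differentiableAt (by norm_num), hq'⟩
  rw [nhds_prod_eq, eventually_prod_iff] at hev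
  obtain ⟨pa, hpa, pb, hpb, hab⟩ := hev
  obtain ⟨r, hr, hrb⟩ := Metric.eventually_nhds_iff_ball.1 hpb
  refine ⟨Metric.ball t0 r, Metric.isOpen_ball, Metric.mem_ball_self hr, τ, h3, ?_⟩
  filter_upwards [h1, hpa, h2.eventually (Metric.ball_mem_nhds t0 hr)] with p hp1 hp2 hp3
  rw [h0] at hp1
  have hmono : StrictMonoOn (fun t => f (p, t)) (Metric.ball t0 r) := by
    have hder : ∀ t ∈ Metric.ball t0 r, HasDerivAt (fun t => f (p, t)) (fderiv ℝ f (p,t) (0,1)) t := by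
      intro t ht
      have := (hab hp2 (hrb t ht)).1.hasFDerivAt
      exact this.comp_hasDerivAt t ((hasDerivAt_const t p).prodMk (hasDerivAt_id t))
    apply strictMonoOn_of_deriv_pos (convex_ball t0 r)
    · intro t ht
      exact (hder t ht).continuousAt.continuousWithinAt
    · intro t ht
      rw [Metric.isOpen_ball.interior_eq] at ht
      rw [(hder t ht).deriv]
      exact (hab hp2 (hrb t ht)).2
  intro t ht
  refine ⟨fun h => ?_, fun h => ?_, fun h => ?_⟩
  · have := hmono hp3 ht h
    simp only at this
    linarith [hp1]
  · have := hmono ht hp3 h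
    simp only at this
    linarith [hp1]
  · rw [h]; exact hp1

lemma oneD_local {ι : Type*} [Finite ι] (F : ι → (Fin N → ℝ) × ℝ → ℝ) (O : Set ℝ) (hO : IsOpen O)
    (t0 : ℝ) (ht0 : t0 ∈ O) (ψ : Fin N → ℝ)
    (hS : ∀ p, MeasurableSet {t | t ∈ O ∧ ∀ l, 0 ≤ F l (p, t)})
    (hF : ∀ l, ContDiffAt ℝ 1 (F l) (ψ, t0))
    (huniq : ∀ l k, F l (ψ, t0) = 0 → F k (ψ, t0) = 0 → l = k)
    (hnd : ∀ l, F l (ψ, t0) = 0 → fderiv ℝ (F l) (ψ, t0) (0, 1) ≠ 0) :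
    ∃ U, IsOpen U ∧ t0 ∈ U ∧ ∀ h' : ℝ → ℝ, Continuous h' →
      HasCompactSupport h' → tsupport h' ⊆ U →
      DifferentiableAt ℝ (fun p => ∫ t in {t | t ∈ O ∧ ∀ l, 0 ≤ F l (p, t)}, h' t) ψ := by
  have hz : ∀ (U : Set ℝ) (h' : ℝ → ℝ), tsupport h' ⊆ U → ∀ t, t ∉ U → h' t = 0 :=
    fun U h' hU t ht => image_eq_zero_of_notMem_tsupport (fun h => ht (hU h))
  -- general reduction: if on U the set is locally given by A p
  have hsign : ∀ l, F l (ψ, t0) ≠ 0 → ∀ᶠ q in 𝓝 (ψ, t0), (0 ≤ F l q ↔ 0 ≤ F l (ψ, t0)) := by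
    intro l hl
    rcases lt_or_gt_of_ne hl with h | h
    · filter_upwards [(hF l).continuousAt.eventually (gt_mem_nhds h)] with q hq
      exact ⟨fun h' => absurd hq (not_lt.2 h'), fun h' => absurd h (not_lt.2 h')⟩
    · filter_upwards [(hF l).continuousAt.eventually (lt_mem_nhds h)] with q hq
      exact ⟨fun _ => h.le, fun _ => hq.le⟩
  have hsign' : ∀ᶠ q in 𝓝 (ψ, t0), q.2 ∈ O ∧ ∀ l, F l (ψ, t0) ≠ 0 → (0 ≤ F l q ↔ 0 ≤ F l (ψ, t0)) := by
    refine (continuousAt_snd.eventually (hO.mem_nhds ht0)).and ?_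
    rw [eventually_all]
    intro l
    by_cases hl : F l (ψ, t0) = 0
    · exact Eventually.of_forall fun q h => absurd hl h
    · filter_upwards [hsign l hl] with q hq _ using hq
  rw [nhds_prod_eq, eventually_prod_iff] at hsign'
  obtain ⟨pa, hpa, pb, hpb, hab⟩ := hsign'
  obtain ⟨r, hr, hrb⟩ := Metric.eventually_nhds_iff_ball.1 hpb
  -- bad case
  by_cases hneg : ∃ l, F l (ψ, t0) < 0
  · obtain ⟨l, hl⟩ := hneg
    refine ⟨Metric.ball t0 r, Metric.isOpen_ball, Metric.mem_ball_self hr, fun h' hc hcs hsupp => ?_⟩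
    apply DifferentiableAt.congr_of_eventuallyEq (differentiableAt_const (0:ℝ))
    filter_upwards [hpa] with p hp
    rw [setInt_eq volume _ ∅ (Metric.ball t0 r) (hS p) MeasurableSet.empty h' (hz _ h' hsupp)]
    · simp
    · intro t ht
      simp only [mem_ofPred_eq, mem_empty_iff_false, iff_false, not_and]
      intro _ hall
      have := ((hab hp (hrb t ht)).2 l hl.ne).1 (hall l)
      exact absurd hl (not_lt.2 this)
  push Not at hneg
  by_cases hzero : ∃ l, F l (ψ, t0) = 0
  · obtain ⟨l, hl⟩ := hzero
    have hred : ∀ p, pa p → ∀ t ∈ Metric.ball t0 r, 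
        (t ∈ {t | t ∈ O ∧ ∀ l, 0 ≤ F l (p, t)} ↔ 0 ≤ F l (p, t)) := by
      intro p hp t ht
      have := hab hp (hrb t ht)
      refine ⟨fun h => h.2 l, fun h => ⟨this.1, fun k => ?_⟩⟩
      by_cases hk : F k (ψ, t0) = 0
      · rw [huniq k l hk hl]; exact h
      · exact (this.2 k hk).2 (hneg k)
    rcases lt_or_gt_of_ne (hnd l hl) with hlt | hgt
    · obtain ⟨U, hU, htU, τ, hτ, hev⟩ := implicit_pos (fun q => - F l q) ψ t0 (hF l).neg
        (by simp [hl]) (by rw [fderiv_fun_neg]; simpa using hlt)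
      refine ⟨U ∩ Metric.ball t0 r, hU.inter Metric.isOpen_ball, ⟨htU, Metric.mem_ball_self hr⟩,
        fun h' hc hcs hsupp => ?_⟩
      have := (hasDerivAt_Iic h' hc hcs (τ ψ)).comp ψ hτ
      apply this.congr_of_eventuallyEq
      filter_upwards [hpa, hev] with p hp hp'
      apply setInt_eq volume _ _ _ (hS p) measurableSet_Iic h' (hz _ h' hsupp)
      intro t ht
      rw [hred p hp t ht.2, mem_Iic]
      obtain ⟨h1, h2, h3⟩ := hp' t ht.1
      constructor
      · intro h
        by_contra hcon
        have := h1 (not_le.1 hcon)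
        linarith
      · intro h
        rcases h.lt_or_eq with h | h
        · linarith [h2 h]
        · linarith [h3 h]
    · obtain ⟨U, hU, htU, τ, hτ, hev⟩ := implicit_pos (F l) ψ t0 (hF l) hl hgt
      refine ⟨U ∩ Metric.ball t0 r, hU.inter Metric.isOpen_ball, ⟨htU, Metric.mem_ball_self hr⟩,
        fun h' hc hcs hsupp => ?_⟩
      have := (hasDerivAt_Ici h' hc hcs (τ ψ)).comp ψ hτ
      apply this.congr_of_eventuallyEq
      filter_upwards [hpa, hev] with p hp hp'
      apply setInt_eq volume _ _ _ (hS p) measurableSet_Ici h' (hz _ h' hsupp)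
      intro t ht
      rw [hred p hp t ht.2, mem_Ici]
      obtain ⟨h1, h2, h3⟩ := hp' t ht.1
      constructor
      · intro h
        by_contra hcon
        have := h2 (not_le.1 hcon)
        linarith
      · intro h
        rcases h.lt_or_eq with h | h
        · linarith [h1 h]
        · linarith [h3 h.symm]
  · push Not at hzero
    refine ⟨Metric.ball t0 r, Metric.isOpen_ball, Metric.mem_ball_self hr, fun h' hc hcs hsupp => ?_⟩
    apply DifferentiableAt.congr_of_eventuallyEq (differentiableAt_const (∫ t in univ, h' t))
    filter_upwards [hpa] with p hp
    rw [setInt_eq volume _ univ (Metric.ball t0 r) (hS p) MeasurableSet.univ h' (hz _ h' hsupp)]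
    intro t ht
    simp only [mem_ofPred_eq, mem_univ, iff_true]
    exact ⟨(hab hp (hrb t ht)).1, fun l => ((hab hp (hrb t ht)).2 l (hzero l)).2 (hneg l)⟩

lemma chart {n : ℕ} (e : EuclideanSpace ℝ (Fin (n+1))) (he : e ≠ 0) :
    ∃ (Φ : ((Fin n → ℝ) × ℝ) ≃L[ℝ] EuclideanSpace ℝ (Fin (n+1))), (∀ x t, Φ (x, t) = Φ (x, 0) + t • e) ∧
      ∃ c : NNReal, c ≠ 0 ∧ (volume : Measure (EuclideanSpace ℝ (Fin (n+1)))) = c • Measure.map Φ volume := by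
  have hfr : Module.finrank ℝ (ℝ ∙ e)ᗮ = n := by
    have : Fact (Module.finrank ℝ (EuclideanSpace ℝ (Fin (n+1))) = n + 1) := ⟨by simp⟩
    exact Submodule.finrank_orthogonal_span_singleton he
  let b : (Fin n → ℝ) ≃L[ℝ] (ℝ ∙ e)ᗮ := ContinuousLinearEquiv.ofFinrankEq (by simp [hfr])
  let L : ((Fin n → ℝ) × ℝ) →ₗ[ℝ] EuclideanSpace ℝ (Fin (n+1)) :=
    LinearMap.coprod ((ℝ ∙ e)ᗮ.subtype ∘ₗ b.toLinearMap) (LinearMap.toSpanSingleton ℝ _ e)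
  have hL : ∀ x t, L (x, t) = (b x : EuclideanSpace ℝ (Fin (n+1))) + t • e := by
    intro x t; simp [L]
  have hinj : Function.Injective L := by
    rw [← LinearMap.ker_eq_bot, LinearMap.ker_eq_bot']
    rintro ⟨x, t⟩ h
    rw [hL] at h
    have h1 : inner ℝ e (b x : EuclideanSpace ℝ (Fin (n+1))) = 0 :=
      Submodule.mem_orthogonal_singleton_iff_inner_right.1 (b x).2
    have h2 : inner ℝ e ((b x : EuclideanSpace ℝ (Fin (n+1))) + t • e) = 0 := by rw [h, inner_zero_right]
    rw [inner_add_right, h1, inner_smul_right, zero_add, mul_eq_zero] at h2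
    have ht : t = 0 := h2.resolve_right (by simpa using he)
    subst ht
    rw [zero_smul, add_zero] at h
    have : b x = 0 := by exact_mod_cast h
    have : x = 0 := by simpa using this
    simp [this]
  let Φl : ((Fin n → ℝ) × ℝ) ≃ₗ[ℝ] EuclideanSpace ℝ (Fin (n+1)) :=
    LinearEquiv.ofInjectiveOfFinrankEq L hinj (by simp)
  have hΦl : ∀ q, Φl q = L q := fun q => rfl
  let Φ := Φl.toContinuousLinearEquiv
  refine ⟨Φ, ?_, ?_⟩
  · intro x t
    change L _ = L _ + _
    rw [hL, hL]; simp
  · have hv : (volume : Measure ((Fin n → ℝ) × ℝ)).IsAddHaarMeasure := by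
      rw [Measure.volume_eq_prod]; infer_instance
    have : (Measure.map Φ volume).IsAddHaarMeasure := Φ.isAddHaarMeasure_map volume
    refine ⟨Measure.addHaarScalarFactor volume (Measure.map Φ volume), ?_, ?_⟩
    · exact (Measure.addHaarScalarFactor_pos_of_isAddHaarMeasure _ _).ne'
    · exact Measure.isAddLeftInvariant_eq_smul _ _

lemma chart_integral {n : ℕ} (Φ : ((Fin n → ℝ) × ℝ) ≃L[ℝ] EuclideanSpace ℝ (Fin (n+1)))
    (c : NNReal) (hc : (volume : Measure (EuclideanSpace ℝ (Fin (n+1)))) = c • Measure.map Φ volume)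
    (g : EuclideanSpace ℝ (Fin (n+1)) → ℝ) (hg : Integrable g (Measure.map Φ volume)) :
    ∫ x, g x = c * ∫ x', ∫ t, g (Φ (x', t)) := by
  rw [hc, integral_smul_nnreal_measure]
  have hme : MeasurableEmbedding Φ := Φ.toHomeomorph.measurableEmbedding
  rw [hme.integral_map, Measure.volume_eq_prod, integral_prod]
  · rfl
  · exact (hme.integrable_map_iff.1 hg)

lemma chart_measure {n : ℕ} (Φ : ((Fin n → ℝ) × ℝ) ≃L[ℝ] EuclideanSpace ℝ (Fin (n+1)))
    (c : NNReal) (hc : (volume : Measure (EuclideanSpace ℝ (Fin (n+1)))) = c • Measure.map Φ volume)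
    (A : Set (EuclideanSpace ℝ (Fin (n+1)))) (hA : MeasurableSet A) :
    volume A = c * ∫⁻ x', volume {t | Φ (x', t) ∈ A} := by
  have hme : MeasurableEmbedding Φ := Φ.toHomeomorph.measurableEmbedding
  rw [hc, Measure.smul_apply, Measure.map_apply hme.measurable hA, Measure.volume_eq_prod,
    Measure.prod_apply (hme.measurable hA)]
  rfl

lemma chart_proj {n : ℕ} (Φ : ((Fin n → ℝ) × ℝ) ≃L[ℝ] EuclideanSpace ℝ (Fin (n+1)))
    (Z : Set (EuclideanSpace ℝ (Fin (n+1)))) (hZ : μH[(n:ℝ)] Z = 0) :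
    ∀ᵐ x' : Fin n → ℝ, ∀ t, Φ (x', t) ∉ Z := by
  let L : EuclideanSpace ℝ (Fin (n+1)) →L[ℝ] (Fin n → ℝ) :=
    (ContinuousLinearMap.fst ℝ (Fin n → ℝ) ℝ).comp Φ.symm.toContinuousLinearMap
  have h1 := L.lipschitz.hausdorffMeasure_image_le (d := (n:ℝ)) (by positivity) Z
  rw [hZ, mul_zero, nonpos_iff_eq_zero] at h1
  have h2 : (μH[(n:ℝ)] : Measure (Fin n → ℝ)) = volume := by
    have := hausdorffMeasure_pi_real (ι := Fin n)
    simpa using this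
  rw [h2] at h1
  rw [ae_iff]
  refine measure_mono_null ?_ h1
  intro x' hx'
  simp only [mem_ofPred_eq, not_forall, not_not] at hx'
  obtain ⟨t, ht⟩ := hx'
  exact ⟨_, ht, by simp [L]⟩

lemma slab {E : Type*} [NormedAddCommGroup E] [NormedSpace ℝ E]
    (f : (Fin N → ℝ) × E → ℝ) (ψ : Fin N → ℝ) (x0 e : E)
    (hf : ContDiffAt ℝ 1 f (ψ, x0))
    (hnd : f (ψ, x0) = 0 → fderiv ℝ f (ψ, x0) (0, e) ≠ 0) :
    ∃ K : ℝ, 0 ≤ K ∧ ∀ᶠ δ in 𝓝[>] (0:ℝ),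
      (∀ p ∈ Metric.ball ψ δ, ∀ p' ∈ Metric.ball ψ δ, ∀ x : E,
        volume {t : ℝ | x + t • e ∈ Metric.ball x0 δ ∧
          ¬ (0 ≤ f (p, x + t • e) ↔ 0 ≤ f (p', x + t • e))} ≤ ENNReal.ofReal (K * ‖p - p'‖)) ∧
      (∀ x : E, volume {t : ℝ | x + t • e ∈ Metric.ball x0 δ ∧ f (ψ, x + t • e) = 0} = 0) ∧
      (∀ x ∈ Metric.ball x0 δ, f (ψ, x) = 0 → fderiv ℝ f (ψ, x) (0, e) ≠ 0) := by
  have hball : ∀ P : (Fin N → ℝ) × E → Prop, (∀ᶠ q in 𝓝 (ψ, x0), P q) → ∀ᶠ δ in 𝓝[>] (0:ℝ),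
      ∀ p ∈ Metric.ball ψ δ, ∀ x ∈ Metric.ball x0 δ, P (p, x) := by
    intro P hP
    obtain ⟨r, hr, hrP⟩ := Metric.eventually_nhds_iff_ball.1 hP
    filter_upwards [Ioc_mem_nhdsGT hr] with δ hδ p hp x hx
    apply hrP
    rw [← ball_prod_same]
    exact ⟨Metric.ball_subset_ball hδ.2 hp, Metric.ball_subset_ball hδ.2 hx⟩
  have hpos : ∀ᶠ δ in 𝓝[>] (0:ℝ), 0 < δ := self_mem_nhdsWithin
  by_cases h0 : f (ψ, x0) = 0
  · have hD := hnd h0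
    set D := fderiv ℝ f (ψ, x0) (0, e) with hDdef
    obtain ⟨K0, s, hs, hlip⟩ := hf.exists_lipschitzOnWith
    have hm : 0 < D * D / 2 := by
      have := mul_self_pos.2 hD
      linarith
    set m := D * D / 2
    have hcont : ContinuousAt (fun q => D * fderiv ℝ f q (0, e)) (ψ, x0) :=
      continuousAt_const.mul ((hf.continuousAt_fderiv (by norm_num)).clm_apply continuousAt_const)
    have hev1 : ∀ᶠ q in 𝓝 (ψ, x0), m < D * fderiv ℝ f q (0, e) := by
      have hlt : m < D * D := by
        have := mul_self_pos.2 hD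
        simp only [m]
        linarith
      exact hcont.eventually (lt_mem_nhds hlt)
    have hev2 : ∀ᶠ q in 𝓝 (ψ, x0), DifferentiableAt ℝ f q := by
      have hA : ∀ᶠ q in 𝓝 (ψ, x0), ContDiffAt ℝ 1 f q := hf.eventually (by simp)
      filter_upwards [hA] with q hq using hq.differentiableAt (by norm_num)
    refine ⟨2 * |D| * K0 / m, by positivity, ?_⟩
    filter_upwards [hpos, hball _ (hev1.and (hev2.and hs))] with δ hδ H
    have hline : ∀ p ∈ Metric.ball ψ δ, ∀ x : E, ∀ t s : ℝ, x + t • e ∈ Metric.ball x0 δ →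
        x + s • e ∈ Metric.ball x0 δ → t ≤ s →
        m * (s - t) ≤ D * f (p, x + s • e) - D * f (p, x + t • e) := by
      intro p hp x t s ht hs' hts
      have hconv : Convex ℝ {t : ℝ | x + t • e ∈ Metric.ball x0 δ} := by
        intro t ht s hs a b ha hb hab
        have h1 := convex_ball x0 δ ht hs ha hb hab
        have h2 : a • (x + t • e) + b • (x + s • e) = x + (a • t + b • s) • e := by
          have : x = (a + b) • x := by rw [hab, one_smul]
          conv_rhs => rw [this]
          simp only [smul_eq_mul]
          module
        rw [h2] at h1
        exact h1
      have hopen : IsOpen {t : ℝ | x + t • e ∈ Metric.ball x0 δ} := 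
        Metric.isOpen_ball.preimage (by fun_prop)
      have hder : ∀ u ∈ {t : ℝ | x + t • e ∈ Metric.ball x0 δ},
          HasDerivAt (fun u => D * f (p, x + u • e)) (D * fderiv ℝ f (p, x + u • e) (0, e)) u := by
        intro u hu
        have h1 := (H p hp _ hu).2.1.hasFDerivAt
        have h2 : HasDerivAt (fun u : ℝ => (p, x + u • e)) (0, e) u := by
          refine (hasDerivAt_const u p).prodMk ?_
          simpa using ((hasDerivAt_id u).smul_const e).const_add x
        exact (h1.comp_hasDerivAt u h2).const_mul D
      refine hconv.mul_sub_le_image_sub_of_le_deriv (f := fun u => D * f (p, x + u • e))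
        (fun u hu => (hder u hu).continuousAt.continuousWithinAt) ?_ ?_ t ht s hs' hts
      · intro u hu
        exact (hder u (interior_subset hu)).differentiableAt.differentiableWithinAt
      · intro u hu
        rw [(hder u (interior_subset hu)).deriv]
        have hu' := interior_subset hu
        exact (H p hp _ hu').1.le
    refine ⟨?_, ?_, ?_⟩
    · intro p hp p' hp' x
      refine (Real.volume_le_diam _).trans ?_
      have hb : ∀ t : ℝ, x + t • e ∈ Metric.ball x0 δ → 
          ¬ (0 ≤ f (p, x + t • e) ↔ 0 ≤ f (p', x + t • e)) → |f (p, x + t • e)| ≤ K0 * ‖p - p'‖ := by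
        intro t ht hnot
        have hl := hlip.dist_le_mul _ (H p hp _ ht).2.2 _ (H p' hp' _ ht).2.2
        rw [Real.dist_eq, Prod.dist_eq, dist_self, max_eq_left dist_nonneg, dist_eq_norm] at hl
        refine le_trans ?_ hl
        by_cases h1 : 0 ≤ f (p, x + t • e)
        · have h2 : f (p', x + t • e) < 0 := by
            by_contra h2; exact hnot ⟨fun _ => not_lt.1 h2, fun _ => h1⟩
          rw [abs_of_nonneg h1, abs_of_nonneg (by linarith)]; linarith
        · have h2 : 0 ≤ f (p', x + t • e) := by
            by_contra h2; exact hnot ⟨fun h => absurd h h1, fun h => absurd h h2⟩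
          push Not at h1
          rw [abs_of_neg h1, abs_of_neg (by linarith)]; linarith
      have hd : ∀ t s : ℝ, x + t • e ∈ Metric.ball x0 δ → x + s • e ∈ Metric.ball x0 δ →
          |f (p, x + t • e)| ≤ K0 * ‖p - p'‖ → |f (p, x + s • e)| ≤ K0 * ‖p - p'‖ → t ≤ s → 
          s - t ≤ 2 * |D| * K0 / m * ‖p - p'‖ := by
        intro t s ht hs' h1 h2 hts
        have h3 := hline p hp x t s ht hs' hts
        have h4 : D * f (p, x + s • e) - D * f (p, x + t • e) ≤ 2 * |D| * K0 * ‖p - p'‖ := by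
          have h5 : |D * f (p, x + s • e)| ≤ |D| * (K0 * ‖p - p'‖) := by
            rw [abs_mul]; gcongr
          have h6 : |D * f (p, x + t • e)| ≤ |D| * (K0 * ‖p - p'‖) := by
            rw [abs_mul]; gcongr
          have := le_abs_self (D * f (p, x + s • e))
          have := neg_abs_le (D * f (p, x + t • e))
          linarith
        rw [div_mul_eq_mul_div, le_div_iff₀ hm]
        linarith
      apply Metric.ediam_le
      rintro t ⟨ht, ht'⟩ s ⟨hs', hs''⟩
      rw [edist_dist, Real.dist_eq]
      apply ENNReal.ofReal_le_ofReal
      rcases le_total t s with h | h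
      · rw [abs_sub_comm, abs_of_nonneg (by linarith)]
        exact hd t s ht hs' (hb t ht ht') (hb s hs' hs'') h
      · rw [abs_of_nonneg (by linarith)]
        exact hd s t hs' ht (hb s hs' hs'') (hb t ht ht') h
    · intro x
      apply Set.Subsingleton.measure_zero
      have : ∀ t s : ℝ, x + t • e ∈ Metric.ball x0 δ → x + s • e ∈ Metric.ball x0 δ →
          f (ψ, x + t • e) = 0 → f (ψ, x + s • e) = 0 → t ≤ s → t = s := by
        intro t s ht hs' h1 h2 hts
        have h3 := hline ψ (Metric.mem_ball_self hδ) x t s ht hs' hts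
        rw [h1, h2] at h3
        have : s - t ≤ 0 := by
          by_contra hcon
          have := mul_pos hm (not_le.1 hcon)
          linarith
        linarith
      rintro t ⟨ht, ht'⟩ s ⟨hs', hs''⟩
      rcases le_total t s with h | h
      · exact this t s ht hs' ht' hs'' h
      · exact (this s t hs' ht hs'' ht' h).symm
    · intro x hx _ hz
      have := (H ψ (Metric.mem_ball_self hδ) x hx).1
      rw [hz] at this
      linarith
  · refine ⟨0, le_rfl, ?_⟩
    have hev : ∀ᶠ q in 𝓝 (ψ, x0), (0 ≤ f q ↔ 0 ≤ f (ψ, x0)) ∧ f q ≠ 0 := by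
      rcases lt_or_gt_of_ne h0 with h | h
      · filter_upwards [hf.continuousAt.eventually (gt_mem_nhds h)] with q hq
        exact ⟨⟨fun h' => absurd hq (not_lt.2 h'), fun h' => absurd h (not_lt.2 h')⟩, hq.ne⟩
      · filter_upwards [hf.continuousAt.eventually (lt_mem_nhds h)] with q hq
        exact ⟨⟨fun _ => h.le, fun _ => hq.le⟩, hq.ne'⟩
    filter_upwards [hpos, hball _ hev] with δ hδ H
    refine ⟨?_, ?_, ?_⟩
    · intro p hp p' hp' x
      rw [measure_mono_null (t := ∅) _ (by simp)]
      · simp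
      · rintro t ⟨ht, ht'⟩
        exact ht' ((H p hp _ ht).1.trans (H p' hp' _ ht).1.symm)
    · intro x
      apply measure_mono_null (t := ∅) _ (by simp)
      rintro t ⟨ht, ht'⟩
      exact (H ψ (Metric.mem_ball_self hδ) _ ht).2 ht'
    · intro x hx hz
      exact absurd hz (H ψ (Metric.mem_ball_self hδ) _ hx).2

lemma meas_cell {E : Type*} [NormedAddCommGroup E] [MeasurableSpace E] [BorelSpace E]
    {ι : Type*} [Finite ι] (Ω : Set E) (hΩ : IsOpen Ω) (g : ι → E → ℝ)
    (hg : ∀ l, ContinuousOn (g l) Ω) : MeasurableSet {x | x ∈ Ω ∧ ∀ l, 0 ≤ g l x} := by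
  have : {x | x ∈ Ω ∧ ∀ l, 0 ≤ g l x} = Ω ∩ ⋂ l, (Ω ∩ g l ⁻¹' (Iio 0))ᶜ := by
    ext x
    simp only [mem_ofPred_eq, mem_inter_iff, mem_iInter, mem_compl_iff, mem_preimage, mem_Iio, not_and,
      not_lt]
    exact ⟨fun h => ⟨h.1, fun l _ => h.2 l⟩, fun h => ⟨h.1, fun l => h.2 l h.1⟩⟩
  rw [this]
  refine hΩ.measurableSet.inter (MeasurableSet.iInter fun l => ?_)
  exact ((hg l).isOpen_inter_preimage hΩ isOpen_Iio).measurableSet.compl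

lemma exists_dir {n : ℕ} {ι : Type*} [Finite ι] (A : ι → Prop)
    (L : ι → EuclideanSpace ℝ (Fin (n+1)) →L[ℝ] ℝ) (hL : ∀ l, A l → ∃ v, L l v ≠ 0) :
    ∃ e, e ≠ 0 ∧ ∀ l, A l → L l e ≠ 0 := by
  obtain ⟨v, hv⟩ : ∃ v : EuclideanSpace ℝ (Fin (n+1)), v ≠ 0 := exists_ne 0
  have hinner : ∃ u : EuclideanSpace ℝ (Fin (n+1)), (innerSL ℝ v) u ≠ 0 := ⟨v, by simpa using hv⟩
  let f : Option {l // A l} → Module.Dual ℝ (EuclideanSpace ℝ (Fin (n+1))) := fun o =>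
    match o with
    | none => (innerSL ℝ v).toLinearMap
    | some l => (L l.1).toLinearMap
  obtain ⟨e, -, he⟩ := Module.Dual.exists_forall_mem_ne_zero_of_forall_exists ⊤ f (by
    rintro (_ | l)
    · obtain ⟨u, hu⟩ := hinner
      exact ⟨u, trivial, hu⟩
    · obtain ⟨u, hu⟩ := hL l.1 l.2
      exact ⟨u, trivial, hu⟩)
  refine ⟨e, ?_, fun l hl => he (some ⟨l, hl⟩)⟩
  rintro rfl
  exact he none (by simp)

lemma line_hcs {n : ℕ} (Φ : ((Fin n → ℝ) × ℝ) ≃L[ℝ] EuclideanSpace ℝ (Fin (n+1)))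
    (h' : EuclideanSpace ℝ (Fin (n+1)) → ℝ) (hcs : HasCompactSupport h') (x' : Fin n → ℝ) :
    HasCompactSupport (fun t : ℝ => h' (Φ (x', t))) := by
  refine HasCompactSupport.intro (K := (fun x => (Φ.symm x).2) '' tsupport h')
    (hcs.isCompact.image (by fun_prop)) ?_
  intro t ht
  by_contra hne
  exact ht ⟨Φ (x', t), subset_tsupport _ hne, by simp⟩

lemma diff_near {n : ℕ} {ι : Type*} [Finite ι] (Ω : Set (EuclideanSpace ℝ (Fin (n+1))))
    (hΩ : IsOpen Ω)
    (F : ι → (Fin N → ℝ) × EuclideanSpace ℝ (Fin (n+1)) → ℝ)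
    (hF : ∀ l, ContDiffOn ℝ 1 (F l) (univ ×ˢ Ω)) (ψ : Fin N → ℝ)
    (hnd : ∀ l, ∀ x ∈ Ω, F l (ψ, x) = 0 → ∃ v, fderiv ℝ (F l) (ψ, x) (0, v) ≠ 0)
    (hgen : ∀ l k, l ≠ k → μH[(n:ℝ)] {x | x ∈ Ω ∧ F l (ψ, x) = 0 ∧ F k (ψ, x) = 0} = 0)
    (x0 : EuclideanSpace ℝ (Fin (n+1))) (hx0 : x0 ∈ Ω) :
    ∃ U, IsOpen U ∧ x0 ∈ U ∧ ∀ h' : EuclideanSpace ℝ (Fin (n+1)) → ℝ, Continuous h' →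
      HasCompactSupport h' → tsupport h' ⊆ U →
      DifferentiableAt ℝ (fun p => ∫ x in {x | x ∈ Ω ∧ ∀ l, 0 ≤ F l (p, x)}, h' x) ψ := by
  classical
  have : Fintype ι := Fintype.ofFinite ι
  have hFat : ∀ l p, ∀ x ∈ Ω, ContDiffAt ℝ 1 (F l) (p, x) := fun l p x hx =>
    (hF l).contDiffAt ((isOpen_univ.prod hΩ).mem_nhds ⟨trivial, hx⟩)
  have hFc : ∀ l p, ContinuousOn (fun x => F l (p, x)) Ω := fun l p =>
    (hF l).continuousOn.comp (by fun_prop) (fun x hx => ⟨trivial, hx⟩)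
  set S : (Fin N → ℝ) → Set (EuclideanSpace ℝ (Fin (n+1))) :=
    fun p => {x | x ∈ Ω ∧ ∀ l, 0 ≤ F l (p, x)} with hSdef
  have hSm : ∀ p, MeasurableSet (S p) := fun p => meas_cell Ω hΩ (fun l x => F l (p, x)) (fun l => hFc l p)
  obtain ⟨e, he0, he⟩ := exists_dir (fun l => F l (ψ, x0) = 0)
    (fun l => (fderiv ℝ (F l) (ψ, x0)).comp (ContinuousLinearMap.inr ℝ _ _)) (by
      intro l hl
      obtain ⟨v, hv⟩ := hnd l x0 hx0 hl
      exact ⟨v, by simpa using hv⟩)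
  obtain ⟨Φ, hΦ, c, hc0, hc⟩ := chart e he0
  choose K hK0 hK using fun l => slab (F l) ψ x0 e (hFat l ψ x0 hx0) (fun hl => by simpa using he l hl)
  have hsub : ∀ᶠ δ in 𝓝[>] (0:ℝ), Metric.ball x0 δ ⊆ Ω := by
    obtain ⟨r, hr, hrΩ⟩ := Metric.isOpen_iff.1 hΩ x0 hx0
    filter_upwards [Ioc_mem_nhdsGT hr] with δ hδ
    exact (Metric.ball_subset_ball hδ.2).trans hrΩ
  have hpos : ∀ᶠ δ in 𝓝[>] (0:ℝ), 0 < δ := self_mem_nhdsWithin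
  obtain ⟨δ, hδ, hδΩ, hslab⟩ := (hpos.and (hsub.and (eventually_all.2 hK))).exists
  refine ⟨Metric.ball x0 δ, Metric.isOpen_ball, Metric.mem_ball_self hδ, fun h' hc' hcs hsupp => ?_⟩
  have hz : ∀ x, x ∉ tsupport h' → h' x = 0 := fun x hx => image_eq_zero_of_notMem_tsupport hx
  obtain ⟨C, hC⟩ := hcs.exists_bound_of_continuous hc'
  have hC0 : 0 ≤ C := (norm_nonneg _).trans (hC 0)
  have hΦc : Continuous Φ := Φ.continuous
  have hline : ∀ x' : Fin n → ℝ, Continuous (fun t : ℝ => Φ (x', t)) := fun x' => by fun_prop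
  have hme : MeasurableEmbedding Φ := Φ.toHomeomorph.measurableEmbedding
  have hint : Integrable h' (Measure.map Φ volume) := by
    rw [hme.integrable_map_iff]
    have : HasCompactSupport (h' ∘ Φ) := hcs.comp_homeomorph Φ.toHomeomorph
    have h2 : Continuous (h' ∘ Φ) := hc'.comp hΦc
    exact h2.integrable_of_hasCompactSupport this
  -- the fibre integrals
  let φ : (Fin N → ℝ) → (Fin n → ℝ) → ℝ := fun p x' => ∫ t in {t | Φ (x', t) ∈ S p}, h' (Φ (x', t))
  have hSl : ∀ p x', MeasurableSet {t | Φ (x', t) ∈ S p} := fun p x' =>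
    (hline x').measurable (hSm p)
  have hφ : ∀ p x', φ p x' = ∫ t, (S p).indicator h' (Φ (x', t)) := by
    intro p x'
    simp only [φ]
    rw [← integral_indicator (hSl p x')]
    rfl
  have hmain : (fun p => ∫ x in S p, h' x) = fun p => (c:ℝ) * ∫ x', φ p x' := by
    ext p
    rw [← integral_indicator (hSm p), chart_integral Φ c hc _ (hint.indicator (hSm p))]
    simp only [hφ]
  have hindm : ∀ p, Integrable (fun q : (Fin n → ℝ) × ℝ => (S p).indicator h' (Φ q)) (volume.prod volume) := by
    intro p
    have := hint.indicator (hSm p)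
    rw [hme.integrable_map_iff] at this
    exact this
  rw [hmain]
  refine DifferentiableAt.const_mul ?_ _
  let Q : Set (Fin n → ℝ) := (fun x => (Φ.symm x).1) '' tsupport h'
  have hQ : IsCompact Q := hcs.isCompact.image (by fun_prop)
  apply diff_integral volume φ ψ (Metric.ball ψ δ) (Metric.ball_mem_nhds ψ hδ) (bound := Q.indicator
    (fun _ => C * ∑ l, K l))
  · intro p
    have h1 := (hindm p).integral_prod_left
    have : φ p = fun x' => ∫ t, (S p).indicator h' (Φ (x', t)) := funext (hφ p)
    rw [this]
    exact h1.aestronglyMeasurable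
  · have h1 := (hindm ψ).integral_prod_left
    have : φ ψ = fun x' => ∫ t, (S ψ).indicator h' (Φ (x', t)) := funext (hφ ψ)
    rw [this]
    exact h1
  · rw [integrable_indicator_iff hQ.measurableSet]
    exact integrableOn_const hQ.measure_lt_top.ne
  · intro x' p hp
    by_cases hx' : x' ∈ Q
    · rw [indicator_of_mem hx', hφ, hφ]
      have hli : ∀ p, Integrable (fun t => (S p).indicator h' (Φ (x', t))) := by
        intro p
        have h1 : HasCompactSupport (fun t => h' (Φ (x', t))) := line_hcs Φ h' hcs x'
        have h2 : Continuous (fun t => h' (Φ (x', t))) := hc'.comp (hline x')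
        exact (h2.integrable_of_hasCompactSupport h1).indicator (hSl p x')
      rw [← integral_sub (hli p) (hli ψ)]
      let B : ι → Set ℝ := fun l => {t : ℝ | Φ (x', 0) + t • e ∈ Metric.ball x0 δ ∧
          ¬ (0 ≤ F l (p, Φ (x', 0) + t • e) ↔ 0 ≤ F l (ψ, Φ (x', 0) + t • e))}
      have hB : volume (⋃ l, B l) ≤ ENNReal.ofReal ((∑ l, K l) * ‖p - ψ‖) := by
        refine (measure_iUnion_fintype_le _ _).trans ?_
        rw [Finset.sum_mul, ENNReal.ofReal_sum_of_nonneg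
          (fun l _ => mul_nonneg (hK0 l) (norm_nonneg _))]
        exact Finset.sum_le_sum fun l _ => (hslab l).1 p hp ψ (Metric.mem_ball_self hδ) _
      have hpt : ∀ t, ‖(S p).indicator h' (Φ (x', t)) - (S ψ).indicator h' (Φ (x', t))‖ₑ ≤
          (⋃ l, B l).indicator (fun _ => ENNReal.ofReal C) t := by
        intro t
        by_cases ht : Φ (x', t) ∈ S p ↔ Φ (x', t) ∈ S ψ
        · have : (S p).indicator h' (Φ (x', t)) = (S ψ).indicator h' (Φ (x', t)) := by
            by_cases h1 : Φ (x', t) ∈ S p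
            · rw [indicator_of_mem h1, indicator_of_mem (ht.1 h1)]
            · rw [indicator_of_notMem h1, indicator_of_notMem (fun h => h1 (ht.2 h))]
          rw [this]; simp
        · by_cases hb : Φ (x', t) ∈ Metric.ball x0 δ
          · have hmem : t ∈ ⋃ l, B l := by
              by_contra hcon
              apply ht
              simp only [mem_iUnion, not_exists] at hcon
              have hiff : ∀ l, 0 ≤ F l (p, Φ (x', t)) ↔ 0 ≤ F l (ψ, Φ (x', t)) := by
                intro l
                by_contra hl
                apply hcon l
                rw [hΦ] at hb hl
                exact ⟨hb, hl⟩
              exact ⟨fun h => ⟨h.1, fun l => (hiff l).1 (h.2 l)⟩,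
                fun h => ⟨h.1, fun l => (hiff l).2 (h.2 l)⟩⟩
            rw [indicator_of_mem hmem, ← ofReal_norm]
            apply ENNReal.ofReal_le_ofReal
            by_cases h1 : Φ (x', t) ∈ S p
            · have h2 : Φ (x', t) ∉ S ψ := fun h => ht ⟨fun _ => h, fun _ => h1⟩
              rw [indicator_of_mem h1, indicator_of_notMem h2, sub_zero]; exact hC _
            · rw [indicator_of_notMem h1, zero_sub, norm_neg]
              by_cases h2 : Φ (x', t) ∈ S ψ
              · rw [indicator_of_mem h2]; exact hC _
              · rw [indicator_of_notMem h2]; simpa using hC0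
          · have h0 := hz _ (fun h => hb (hsupp h))
            rw [indicator_apply_eq_zero.2 (fun _ => h0), indicator_apply_eq_zero.2 (fun _ => h0)]
            simp
      have hfin : ‖∫ t, ((S p).indicator h' (Φ (x', t)) - (S ψ).indicator h' (Φ (x', t)))‖ₑ ≤
          ENNReal.ofReal (C * ((∑ l, K l) * ‖p - ψ‖)) := by
        refine (enorm_integral_le_lintegral_enorm _).trans ((lintegral_mono hpt).trans ?_)
        refine (lintegral_indicator_const_le _ _).trans ?_
        rw [ENNReal.ofReal_mul hC0]
        gcongr
      rw [← ofReal_norm, ENNReal.ofReal_le_ofReal_iff] at hfin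
      · rw [mul_assoc]; exact hfin
      · exact mul_nonneg hC0 (mul_nonneg (Finset.sum_nonneg fun l _ => hK0 l) (norm_nonneg _))
    · rw [indicator_of_notMem hx', zero_mul, hφ, hφ]
      have : ∀ t, h' (Φ (x', t)) = 0 := by
        intro t
        apply hz
        intro h
        exact hx' ⟨_, h, by simp⟩
      have h2 : ∀ p t, (S p).indicator h' (Φ (x', t)) = 0 := fun p t =>
        indicator_apply_eq_zero.2 (fun _ => this t)
      simp [h2]
  · have hae : ∀ᵐ x' : Fin n → ℝ, ∀ l k, l ≠ k → ∀ t,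
        Φ (x', t) ∉ {x | x ∈ Ω ∧ F l (ψ, x) = 0 ∧ F k (ψ, x) = 0} := by
      rw [ae_all_iff]; intro l
      rw [ae_all_iff]; intro k
      by_cases hlk : l = k
      · exact Eventually.of_forall fun _ h => absurd hlk h
      · filter_upwards [chart_proj Φ _ (hgen l k hlk)] with x' hx' _ using hx'
    filter_upwards [hae] with x' hx'
    have h1 : HasCompactSupport (fun t => h' (Φ (x', t))) := line_hcs Φ h' hcs x'
    have h2 : Continuous (fun t => h' (Φ (x', t))) := hc'.comp (hline x')
    apply diff_local volume (fun p => {t | Φ (x', t) ∈ S p}) ψ _ h2 h1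
    intro t0 ht0
    have ht1 : Φ (x', t0) ∈ Metric.ball x0 δ :=
      hsupp (tsupport_comp_subset_preimage h' (hline x') ht0)
    have ht2 := hδΩ ht1
    have hlin : HasFDerivAt (fun q : (Fin N → ℝ) × ℝ => (q.1, Φ (x', q.2)))
        ((ContinuousLinearMap.fst ℝ (Fin N → ℝ) ℝ).prod
          ((ContinuousLinearMap.snd ℝ (Fin N → ℝ) ℝ).smulRight e)) (ψ, t0) := by
      refine hasFDerivAt_fst.prodMk ?_
      have : (fun q : (Fin N → ℝ) × ℝ => Φ (x', q.2)) = fun q => Φ (x', 0) + q.2 • e :=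
        funext fun q => hΦ _ _
      rw [this]
      exact ((ContinuousLinearMap.snd ℝ (Fin N → ℝ) ℝ).smulRight e).hasFDerivAt.const_add _
    apply oneD_local (fun l q => F l (q.1, Φ (x', q.2))) {t | Φ (x', t) ∈ Ω}
      (hΩ.preimage (hline x')) t0 ht2 ψ
    · intro p
      exact hSl p x'
    · intro l
      refine (hFat l ψ _ ht2).comp (ψ, t0) ?_
      fun_prop
    · intro l k hl hk
      by_contra hlk
      exact hx' l k hlk t0 ⟨ht2, hl, hk⟩
    · intro l hl
      have h3 := ((hFat l ψ _ ht2).differentiableAt (by norm_num)).hasFDerivAt.comp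
        (f := fun q : (Fin N → ℝ) × ℝ => (q.1, Φ (x', q.2))) (ψ, t0) hlin
      have h4 := h3.fderiv
      have h5 := (hslab l).2.2 _ ht1 hl
      change fderiv ℝ (F l ∘ fun q : (Fin N → ℝ) × ℝ => (q.1, Φ (x', q.2))) (ψ, t0) (0, 1) ≠ 0
      rw [h4]
      simpa using h5

lemma diff_total {n : ℕ} {ι : Type*} [Finite ι] (Ω : Set (EuclideanSpace ℝ (Fin (n+1))))
    (hΩ : IsOpen Ω)
    (F : ι → (Fin N → ℝ) × EuclideanSpace ℝ (Fin (n+1)) → ℝ)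
    (hF : ∀ l, ContDiffOn ℝ 1 (F l) (univ ×ˢ Ω)) (ψ : Fin N → ℝ)
    (hnd : ∀ l, ∀ x ∈ Ω, F l (ψ, x) = 0 → ∃ v, fderiv ℝ (F l) (ψ, x) (0, v) ≠ 0)
    (hgen : ∀ l k, l ≠ k → μH[(n:ℝ)] {x | x ∈ Ω ∧ F l (ψ, x) = 0 ∧ F k (ψ, x) = 0} = 0)
    (h : EuclideanSpace ℝ (Fin (n+1)) → ℝ) (hc : Continuous h) (hcs : HasCompactSupport h)
    (hsupp : tsupport h ⊆ Ω) :
    DifferentiableAt ℝ (fun p => ∫ x in {x | x ∈ Ω ∧ ∀ l, 0 ≤ F l (p, x)}, h x) ψ :=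
  diff_local volume _ ψ h hc hcs
    (fun x hx => diff_near Ω hΩ F hF ψ hnd hgen x (hsupp hx))

lemma null_ties {n : ℕ} (Ω : Set (EuclideanSpace ℝ (Fin (n+1))))
    (hΩ : IsOpen Ω) (f : (Fin N → ℝ) × EuclideanSpace ℝ (Fin (n+1)) → ℝ)
    (hF : ContDiffOn ℝ 1 f (univ ×ˢ Ω)) (ψ : Fin N → ℝ)
    (hnd : ∀ x ∈ Ω, f (ψ, x) = 0 → ∃ v, fderiv ℝ f (ψ, x) (0, v) ≠ 0) :
    volume {x | x ∈ Ω ∧ f (ψ, x) = 0} = 0 := by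
  apply measure_null_of_locally_null
  rintro x0 ⟨hx0, hfx0⟩
  obtain ⟨e, he⟩ := hnd x0 hx0 hfx0
  have he0 : e ≠ 0 := by rintro rfl; exact he (by rw [← Prod.zero_eq_mk, map_zero])
  obtain ⟨Φ, hΦ, c, hc0, hc⟩ := chart e he0
  have hat : ContDiffAt ℝ 1 f (ψ, x0) :=
    hF.contDiffAt ((isOpen_univ.prod hΩ).mem_nhds ⟨trivial, hx0⟩)
  obtain ⟨K, -, hK⟩ := slab f ψ x0 e hat (fun _ => he)
  have hpos : ∀ᶠ δ in 𝓝[>] (0:ℝ), 0 < δ := self_mem_nhdsWithin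
  obtain ⟨δ, hδ, -, h2, -⟩ := (hpos.and hK).exists
  refine ⟨{x | x ∈ Ω ∧ f (ψ, x) = 0} ∩ Metric.ball x0 δ, ?_, ?_⟩
  · exact inter_mem self_mem_nhdsWithin (mem_nhdsWithin_of_mem_nhds (Metric.ball_mem_nhds _ hδ))
  · have hfc : ContinuousOn (fun x => f (ψ, x)) Ω :=
      hF.continuousOn.comp (by fun_prop) (fun x hx => ⟨trivial, hx⟩)
    have hm : MeasurableSet ({x | x ∈ Ω ∧ f (ψ, x) = 0} ∩ Metric.ball x0 δ) := by
      refine MeasurableSet.inter ?_ measurableSet_ball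
      have : {x | x ∈ Ω ∧ f (ψ, x) = 0} = Ω ∩ (Ω ∩ (fun x => f (ψ, x)) ⁻¹' {0}ᶜ)ᶜ := by
        ext x
        simp only [mem_ofPred_eq, mem_inter_iff, mem_compl_iff, mem_preimage, mem_singleton_iff]
        tauto
      rw [this]
      exact hΩ.measurableSet.inter
        (hfc.isOpen_inter_preimage hΩ isOpen_compl_singleton).measurableSet.compl
    rw [chart_measure Φ c hc _ hm]
    have : ∀ x', volume {t | Φ (x', t) ∈ {x | x ∈ Ω ∧ f (ψ, x) = 0} ∩ Metric.ball x0 δ} = 0 := by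
      intro x'
      refine measure_mono_null ?_ (h2 (Φ (x', 0)))
      rintro t ⟨⟨h3, h4⟩, h5⟩
      simp only [mem_ofPred_eq] at h3 h4 h5 ⊢
      rw [hΦ] at h4 h5
      exact ⟨h5, h4⟩
    simp only [this, lintegral_zero, mul_zero]

lemma pure_point {n : ℕ} (U : Set (EuclideanSpace ℝ (Fin (n+1)))) (hU : IsOpen U)
    (hUc : IsPreconnected U) (g : Fin N → EuclideanSpace ℝ (Fin (n+1)) → ℝ)
    (hg : ∀ i, ContinuousOn (g i) U)
    (htrip : ∀ i j k, i ≠ j → i ≠ k → j ≠ k → μH[(n:ℝ)] {x | x ∈ U ∧ g i x = g j x ∧ g i x = g k x} = 0)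
    (htie : ∀ i j, i ≠ j → volume {x | x ∈ U ∧ g i x = g j x} = 0)
    (hne : ∀ i, ∃ x ∈ U, ∀ k, k ≠ i → g k x < g i x)
    (S : Set (Fin N)) (hS : S.Nonempty) (hS' : Sᶜ.Nonempty) :
    ∃ j ∈ S, ∃ i ∈ Sᶜ, ∃ x ∈ U, g i x = g j x ∧ ∀ k, k ≠ i → k ≠ j → g k x < g i x := by
  classical
  have hSf : S.toFinset.Nonempty := by simpa using hS
  have hSf' : (Sᶜ).toFinset.Nonempty := Set.toFinset_nonempty.2 hS'
  let u1 : EuclideanSpace ℝ (Fin (n+1)) → ℝ := fun x => S.toFinset.sup' hSf (fun j => g j x)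
  let u2 : EuclideanSpace ℝ (Fin (n+1)) → ℝ := fun x => (Sᶜ).toFinset.sup' hSf' (fun j => g j x)
  let u : EuclideanSpace ℝ (Fin (n+1)) → ℝ := fun x => u1 x - u2 x
  have hu : ContinuousOn u U :=
    (ContinuousOn.finset_sup'_apply hSf (fun i _ => hg i)).sub
      (ContinuousOn.finset_sup'_apply hSf' (fun i _ => hg i))
  have hz : ∀ x, u x = 0 → ∃ j ∈ S, ∃ i ∈ Sᶜ, g i x = g j x ∧ ∀ k, g k x ≤ g i x := by
    intro x hx
    obtain ⟨j, hj, hj'⟩ := Finset.exists_mem_eq_sup' hSf (fun j => g j x)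
    obtain ⟨i, hi, hi'⟩ := Finset.exists_mem_eq_sup' hSf' (fun j => g j x)
    have h0 : u1 x = u2 x := sub_eq_zero.1 hx
    have h1 : u1 x = g j x := hj'
    have h2 : u2 x = g i x := hi'
    refine ⟨j, by simpa using hj, i, by simpa using hi, by rw [← h1, ← h2, h0], fun k => ?_⟩
    by_cases hk : k ∈ S
    · rw [← h2, ← h0]
      exact Finset.le_sup' (fun j => g j x) (by simpa using hk)
    · rw [← h2]
      exact Finset.le_sup' (fun j => g j x) (by simpa using hk)
  let A := {x | x ∈ U ∧ 0 < u x}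
  let B := {x | x ∈ U ∧ u x < 0}
  have hA : IsOpen A := hu.isOpen_inter_preimage hU isOpen_Ioi
  have hB : IsOpen B := hu.isOpen_inter_preimage hU isOpen_Iio
  have hAne : ∃ x, x ∈ A := by
    obtain ⟨j, hj⟩ := hS
    obtain ⟨x, hx, hxk⟩ := hne j
    refine ⟨x, hx, sub_pos.2 ?_⟩
    refine lt_of_lt_of_le ?_ (Finset.le_sup' (fun j => g j x) (by simpa using hj))
    refine (Finset.sup'_lt_iff _).2 fun k hk => hxk k ?_
    rintro rfl
    simp at hk
    exact hk hj
  have hBne : ∃ x, x ∈ B := by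
    obtain ⟨j, hj⟩ := hS'
    obtain ⟨x, hx, hxk⟩ := hne j
    refine ⟨x, hx, sub_neg.2 ?_⟩
    refine lt_of_lt_of_le ?_ (Finset.le_sup' (fun j => g j x) (by simpa using hj))
    refine (Finset.sup'_lt_iff _).2 fun k hk => hxk k ?_
    rintro rfl
    simp at hk
    exact hj hk
  have hnull : volume {x | x ∈ U ∧ u x = 0} = 0 := by
    refine measure_mono_null (t := ⋃ i : Fin N, ⋃ j : Fin N, ⋃ _ : i ≠ j, {x | x ∈ U ∧ g i x = g j x}) ?_ ?_
    · rintro x ⟨hx, hux⟩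
      obtain ⟨j, hj, i, hi, hij, -⟩ := hz x hux
      simp only [mem_iUnion]
      refine ⟨i, j, ?_, hx, hij⟩
      rintro rfl
      exact hi hj
    · simp only [measure_iUnion_null_iff]
      exact htie
  have hcov : U ⊆ closure A ∪ closure B := by
    rw [← closure_union]
    intro x hx
    rw [mem_closure_iff]
    intro o ho hxo
    by_contra hcon
    have h1 : (o ∩ U) ⊆ {x | x ∈ U ∧ u x = 0} := by
      rintro z ⟨hzo, hzU⟩
      refine ⟨hzU, ?_⟩
      by_contra hne
      rcases lt_or_gt_of_ne hne with h | h
      · exact hcon ⟨z, hzo, Or.inr ⟨hzU, h⟩⟩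
      · exact hcon ⟨z, hzo, Or.inl ⟨hzU, h⟩⟩
    have h2 := measure_mono_null h1 hnull
    exact ((ho.inter hU).measure_pos volume ⟨x, hxo, hx⟩).ne' h2
  obtain ⟨a0, ha0⟩ := hAne
  obtain ⟨b0, hb0⟩ := hBne
  obtain ⟨x0, hx0U, hx0A, hx0B⟩ := isPreconnected_closed_iff.1 hUc (closure A) (closure B)
    isClosed_closure isClosed_closure hcov ⟨a0, ha0.1, subset_closure ha0⟩ ⟨b0, hb0.1, subset_closure hb0⟩
  obtain ⟨r, hr, hrU⟩ := Metric.isOpen_iff.1 hU x0 hx0U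
  obtain ⟨a, haB, haA⟩ := mem_closure_iff.1 hx0A _ Metric.isOpen_ball (Metric.mem_ball_self hr)
  obtain ⟨b, hbB, hbB'⟩ := mem_closure_iff.1 hx0B _ Metric.isOpen_ball (Metric.mem_ball_self hr)
  have hab : b - a ≠ 0 := by
    intro h
    rw [sub_eq_zero] at h
    rw [h] at hbB'
    exact lt_asymm haA.2 hbB'.2
  obtain ⟨Φ, hΦ, c, -, -⟩ := chart (b - a) hab
  obtain ⟨a', ta, ha'⟩ : ∃ a' ta, Φ (a', ta) = a := ⟨(Φ.symm a).1, (Φ.symm a).2, by simp⟩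
  have hb' : Φ (a', ta + 1) = b := by
    rw [hΦ, add_smul, ← add_assoc, ← hΦ, ha']; simp
  let O : Set (Fin n → ℝ) := {x' | Φ (x', ta) ∈ A ∩ Metric.ball x0 r} ∩
    {x' | Φ (x', ta + 1) ∈ B ∩ Metric.ball x0 r}
  have hO : IsOpen O := by
    refine IsOpen.inter ?_ ?_
    · exact (hA.inter Metric.isOpen_ball).preimage (f := fun x' => Φ (x', ta)) (by fun_prop)
    · exact (hB.inter Metric.isOpen_ball).preimage (f := fun x' => Φ (x', ta + 1)) (by fun_prop)
  have haO : a' ∈ O := by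
    refine ⟨?_, ?_⟩
    · change Φ (a', ta) ∈ A ∩ Metric.ball x0 r
      rw [ha']; exact ⟨haA, haB⟩
    · change Φ (a', ta + 1) ∈ B ∩ Metric.ball x0 r
      rw [hb']; exact ⟨hbB', hbB⟩
  have hae : ∀ᵐ x' : Fin n → ℝ, ∀ i j k, i ≠ j → i ≠ k → j ≠ k → ∀ t,
      Φ (x', t) ∉ {x | x ∈ U ∧ g i x = g j x ∧ g i x = g k x} := by
    rw [ae_all_iff]; intro i
    rw [ae_all_iff]; intro j
    rw [ae_all_iff]; intro k
    by_cases h : i ≠ j ∧ i ≠ k ∧ j ≠ k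
    · filter_upwards [chart_proj Φ _ (htrip i j k h.1 h.2.1 h.2.2)] with x' hx' _ _ _ using hx'
    · exact Eventually.of_forall fun _ h1 h2 h3 => absurd ⟨h1, h2, h3⟩ h
  obtain ⟨x', hx'O, hx'⟩ := (Measure.dense_of_ae hae).inter_open_nonempty O hO ⟨a', haO⟩
  have hseg : ∀ t ∈ Icc ta (ta + 1), Φ (x', t) ∈ Metric.ball x0 r := by
    intro t ht
    have hcv0 : Convex ℝ (Metric.ball x0 r) := convex_ball x0 r
    have hcv := hcv0 hx'O.1.2 hx'O.2.2 (a := ta + 1 - t) (b := t - ta)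
      (by linarith [ht.2]) (by linarith [ht.1]) (by ring)
    convert hcv using 1
    rw [← map_smul, ← map_smul, ← map_add]
    congr 1
    ext
    · simp; ring
    · simp; ring
  have hcont : ContinuousOn (fun t : ℝ => u (Φ (x', t))) (Icc ta (ta + 1)) :=
    hu.comp (by fun_prop) (fun t ht => hrU (hseg t ht))
  obtain ⟨t, ht, hut⟩ := intermediate_value_Icc' (by linarith) hcont
    (show (0:ℝ) ∈ _ from ⟨hx'O.2.1.2.le, hx'O.1.1.2.le⟩)
  obtain ⟨j, hj, i, hi, hij, hmax⟩ := hz _ hut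
  have hine : i ≠ j := by rintro rfl; exact hi hj
  refine ⟨j, hj, i, hi, Φ (x', t), hrU (hseg t ht), hij, fun k hki hkj => ?_⟩
  refine lt_of_le_of_ne (hmax k) fun heq => ?_
  exact hx' i j k hine hki.symm hkj.symm t ⟨hrU (hseg t ht), hij, heq.symm⟩

lemma slice_volume {n : ℕ} (W : Set (EuclideanSpace ℝ (Fin (n+1)))) (hW : IsOpen W)
    (f : EuclideanSpace ℝ (Fin (n+1)) → ℝ) (hfW : ContinuousOn f W)
    (x0 : EuclideanSpace ℝ (Fin (n+1))) (hx0 : x0 ∈ W) (hf : ContDiffAt ℝ 1 f x0)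
    (hf0 : f x0 = 0) (v : EuclideanSpace ℝ (Fin (n+1))) (hv : fderiv ℝ f x0 v ≠ 0) :
    ∃ κ : NNReal, 0 < κ ∧ ∀ᶠ s in 𝓝[>] (0:ℝ),
      (κ : ENNReal) * ENNReal.ofReal s ≤ volume {x | x ∈ W ∧ 0 < f x ∧ f x ≤ s} := by
  obtain ⟨e, he⟩ : ∃ e, 0 < fderiv ℝ f x0 e := by
    rcases lt_or_gt_of_ne hv with h | h
    · exact ⟨-v, by simpa using h⟩
    · exact ⟨v, h⟩
  have he0 : e ≠ 0 := by rintro rfl; simp at he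
  obtain ⟨Φ, hΦ, c, hc0, hc⟩ := chart e he0
  obtain ⟨M, T, hT, hM⟩ := hf.exists_lipschitzOnWith
  obtain ⟨x0', t0, hx0'⟩ : ∃ x' t, Φ (x', t) = x0 := ⟨(Φ.symm x0).1, (Φ.symm x0).2, by simp⟩
  have hnb : Φ ⁻¹' (W ∩ T) ∈ 𝓝 (x0', t0) := by
    apply Φ.continuous.continuousAt.preimage_mem_nhds
    rw [hx0']
    exact inter_mem (hW.mem_nhds hx0) hT
  obtain ⟨r, hr, hrW⟩ := Metric.mem_nhds_iff.1 hnb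
  have hder : HasDerivAt (fun t : ℝ => f (Φ (x0', t))) (fderiv ℝ f x0 e) t0 := by
    have h1 : HasDerivAt (fun t : ℝ => Φ (x0', t)) e t0 := by
      have : (fun t : ℝ => Φ (x0', t)) = fun t => Φ (x0', 0) + t • e := funext fun t => hΦ _ _
      rw [this]
      simpa using ((hasDerivAt_id t0).smul_const e).const_add (Φ (x0', 0))
    have h2 : HasFDerivAt f (fderiv ℝ f x0) (Φ (x0', t0)) := by
      rw [hx0']; exact (hf.differentiableAt (by norm_num)).hasFDerivAt
    exact h2.comp_hasDerivAt t0 h1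
  have hsgn := eventually_nhdsWithin_sign_eq_of_deriv_pos (f := fun t : ℝ => f (Φ (x0', t)))
    (x₀ := t0) (by rw [hder.deriv]; exact he) (by rw [hx0', hf0])
  obtain ⟨ε, hε, hsg⟩ := Metric.eventually_nhds_iff.1 hsgn
  obtain ⟨τ, hτ0, hτε, hτr⟩ : ∃ τ : ℝ, 0 < τ ∧ τ < ε ∧ τ < r :=
    ⟨min ε r / 2, by positivity, by linarith [min_le_left ε r, lt_min hε hr],
      by linarith [min_le_right ε r, lt_min hε hr]⟩
  have hplus : 0 < f (Φ (x0', t0 + τ)) := by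
    have := @hsg (t0 + τ) (by simpa [abs_of_pos hτ0] using hτε)
    simp only [add_sub_cancel_left, sign_pos hτ0, sign_eq_one_iff] at this
    exact this
  have hminus : f (Φ (x0', t0 - τ)) < 0 := by
    have := @hsg (t0 - τ) (by simpa [Real.dist_eq, abs_of_pos hτ0] using hτε)
    rw [show t0 - τ - t0 = -τ by ring, sign_neg (by linarith : -τ < 0), sign_eq_neg_one_iff] at this
    exact this
  have hbox : ∀ x' ∈ Metric.ball x0' r, ∀ t ∈ Icc (t0 - τ) (t0 + τ), Φ (x', t) ∈ W ∩ T := by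
    intro x' hx' t ht
    apply hrW
    rw [Metric.mem_ball, Prod.dist_eq]
    refine max_lt hx' ?_
    rw [Real.dist_eq, abs_lt]
    exact ⟨by linarith [ht.1], by linarith [ht.2]⟩
  have hfx : ∀ t ∈ Icc (t0 - τ) (t0 + τ), ContinuousAt (fun x' => f (Φ (x', t))) x0' := by
    intro t ht
    have h1 : Φ (x0', t) ∈ W := (hbox x0' (Metric.mem_ball_self hr) t ht).1
    have h2 : ContinuousAt f (Φ (x0', t)) := hfW.continuousAt (hW.mem_nhds h1)
    exact ContinuousAt.comp (f := fun x' => Φ (x', t)) h2 (by fun_prop)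
  have hev : ∀ᶠ x' in 𝓝 x0', x' ∈ Metric.ball x0' r ∧ f (Φ (x0', t0 + τ)) / 2 < f (Φ (x', t0 + τ)) ∧
      f (Φ (x', t0 - τ)) < 0 := by
    have hb1 : ∀ᶠ x' in 𝓝 x0', x' ∈ Metric.ball x0' r := Metric.ball_mem_nhds x0' hr
    refine hb1.and (Eventually.and ?_ ?_)
    · exact (hfx (t0 + τ) ⟨by linarith, le_rfl⟩).eventually_const_lt (by linarith)
    · exact (hfx (t0 - τ) ⟨le_rfl, by linarith⟩).eventually_lt_const hminus
  obtain ⟨O, hO, hOo, hxO⟩ := eventually_nhds_iff.1 hev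
  let M' : NNReal := M * ‖e‖₊ + 1
  have hfib : ∀ s : ℝ, 0 < s → s < f (Φ (x0', t0 + τ)) / 2 → ∀ x' ∈ O,
      ENNReal.ofReal s ≤ M' * volume {t | Φ (x', t) ∈ {x | x ∈ W ∧ 0 < f x ∧ f x ≤ s}} := by
    intro s hs hs1 x' hx'
    obtain ⟨h1, h2, h3⟩ := hO x' hx'
    have hlip : LipschitzOnWith M' (fun t : ℝ => f (Φ (x', t))) (Icc (t0 - τ) (t0 + τ)) := by
      have hl1 : LipschitzOnWith ‖e‖₊ (fun t : ℝ => Φ (x', t)) (Icc (t0 - τ) (t0 + τ)) := by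
        refine LipschitzWith.lipschitzOnWith (LipschitzWith.of_dist_le_mul fun p q => ?_)
        rw [hΦ x' p, hΦ x' q, dist_add_left, dist_eq_norm, ← sub_smul, norm_smul, mul_comm]
        rfl
      refine (hM.comp hl1 (fun t ht => (hbox x' h1 t ht).2)).weaken ?_
      exact le_self_add
    have hsub : Ioc 0 s ⊆ (fun t : ℝ => f (Φ (x', t))) ''
        ({t | Φ (x', t) ∈ {x | x ∈ W ∧ 0 < f x ∧ f x ≤ s}} ∩ Icc (t0 - τ) (t0 + τ)) := by
      intro w hw
      obtain ⟨t, ht, htw⟩ := intermediate_value_Icc (by linarith) hlip.continuousOn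
        (show w ∈ _ from ⟨(h3.trans hw.1).le, by linarith [hw.2]⟩)
      have htw' : f (Φ (x', t)) = w := htw
      exact ⟨t, ⟨⟨(hbox x' h1 t ht).1, by rw [htw']; exact hw.1, by rw [htw']; exact hw.2⟩, ht⟩, htw⟩
    have h5 := (hlip.mono (inter_subset_right (s := {t | Φ (x', t) ∈ {x | x ∈ W ∧ 0 < f x ∧ f x ≤ s}}))).hausdorffMeasure_image_le
      (d := 1) (by norm_num)
    rw [hausdorffMeasure_real, ENNReal.rpow_one] at h5
    calc ENNReal.ofReal s = volume (Ioc 0 s) := by simp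
      _ ≤ _ := measure_mono hsub
      _ ≤ _ := h5
      _ ≤ _ := by gcongr; exact inter_subset_left
  have hVO : 0 < volume O := hOo.measure_pos volume ⟨x0', hxO⟩
  have hM'0 : (M' : ENNReal) ≠ 0 := by simp [M']
  have hq : 0 < (c : ENNReal) * ((M' : ENNReal)⁻¹ * volume O) := by
    refine ENNReal.mul_pos (by simpa using hc0) (ENNReal.mul_pos ?_ hVO.ne').ne'
    simp
  obtain ⟨κ, hκ0, hκ⟩ := ENNReal.lt_iff_exists_nnreal_btwn.1 hq
  refine ⟨κ, by simpa using hκ0, ?_⟩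
  filter_upwards [Ioo_mem_nhdsGT (show (0:ℝ) < f (Φ (x0', t0 + τ)) / 2 by linarith)] with s hs
  have hmeas : MeasurableSet {x | x ∈ W ∧ 0 < f x ∧ f x ≤ s} := by
    have : {x | x ∈ W ∧ 0 < f x ∧ f x ≤ s} = (W ∩ f ⁻¹' (Ioi 0)) ∩ (W ∩ f ⁻¹' (Ioi s))ᶜ := by
      ext x
      simp only [mem_ofPred_eq, mem_inter_iff, mem_compl_iff, mem_preimage, mem_Ioi, not_and, not_lt]
      tauto
    rw [this]
    exact (hfW.isOpen_inter_preimage hW isOpen_Ioi).measurableSet.inter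
      (hfW.isOpen_inter_preimage hW isOpen_Ioi).measurableSet.compl
  rw [chart_measure Φ c hc _ hmeas]
  calc (κ : ENNReal) * ENNReal.ofReal s ≤ c * ((M' : ENNReal)⁻¹ * volume O) * ENNReal.ofReal s := by gcongr
    _ = c * (((M' : ENNReal)⁻¹ * ENNReal.ofReal s) * volume O) := by ring
    _ = c * ∫⁻ _ in O, ((M' : ENNReal)⁻¹ * ENNReal.ofReal s) := by rw [setLIntegral_const]
    _ ≤ c * ∫⁻ x' in O, volume {t | Φ (x', t) ∈ {x | x ∈ W ∧ 0 < f x ∧ f x ≤ s}} := by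
        refine mul_le_mul_right ?_ _
        refine setLIntegral_mono' hOo.measurableSet fun x' hx' => ?_
        rw [ENNReal.inv_mul_le_iff hM'0 (by simp)]
        exact hfib s hs.1 hs.2 x' hx'
    _ ≤ _ := mul_le_mul_right (setLIntegral_le_lintegral _ _) _


lemma deriv_ge (φ : ℝ → ℝ) (φ' κ : ℝ) (h : HasDerivAt φ φ' 0)
    (hk : ∀ᶠ s in 𝓝[>] (0:ℝ), φ 0 + κ * s ≤ φ s) : κ ≤ φ' := by
  have h1 := h.tendsto_slope_zero_right
  refine ge_of_tendsto h1 ?_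
  filter_upwards [hk, self_mem_nhdsWithin] with s hs hs0
  have hs0' : 0 < s := hs0
  rw [zero_add, smul_eq_mul, inv_mul_eq_div, le_div_iff₀ hs0']
  linarith

end

/-- Proposition 3.4: properties of the differential `DH(ψ)`: rank `N−1`, image `𝟙^⊥`,
and every nonzero kernel vector has all coordinates nonzero and of the same sign. -/
theorem differential_properties
    (hd : 1 ≤ d) (hN : 1 ≤ N)
    {Ω : Set (EuclideanSpace ℝ (Fin d))} (hΩo : IsOpen Ω) (hΩb : Bornology.IsBounded Ω)
    (y : Fin N → EuclideanSpace ℝ (Fin d)) (hy : Function.Injective y)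
    (G : EuclideanSpace ℝ (Fin d) → Fin N → ℝ → ℝ)
    (Gx : EuclideanSpace ℝ (Fin d) → Fin N → ℝ → EuclideanSpace ℝ (Fin d))
    (Gv : EuclideanSpace ℝ (Fin d) → Fin N → ℝ → ℝ)
    (hGx : ∀ x ∈ Ω, ∀ (i : Fin N) (v : ℝ), HasGradientAt (fun x' => G x' i v) (Gx x i v) x)
    (hGv : ∀ x ∈ Ω, ∀ (i : Fin N) (v : ℝ), HasDerivAt (fun v' => G x i v') (Gv x i v) v)
    (hGxc : ∀ i : Fin N, ContinuousOn (fun q : EuclideanSpace ℝ (Fin d) × ℝ => Gx q.1 i q.2) (Ω ×ˢ Set.univ))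
    (hGvc : ∀ i : Fin N, ContinuousOn (fun q : EuclideanSpace ℝ (Fin d) × ℝ => Gv q.1 i q.2) (Ω ×ˢ Set.univ))
    (hG2 : ∀ i : Fin N, ContDiffOn ℝ 2 (fun q : EuclideanSpace ℝ (Fin d) × ℝ => G q.1 i q.2) (Ω ×ˢ Set.univ))
    (hReg : ∀ α β : ℝ, α < β → ∃ C : ℝ, ∀ x ∈ Ω, ∀ i : Fin N, ∀ v ∈ Set.Icc α β, ‖Gx x i v‖ ≤ C)
    (hMono : ∀ x ∈ Ω, ∀ (i : Fin N) (v : ℝ), Gv x i v < 0)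
    (hTwist : ∀ x ∈ Ω, Function.Injective fun q : Fin N × ℝ => (G x q.1 q.2, Gx x q.1 q.2))
    {X : Set (EuclideanSpace ℝ (Fin d))} (hXc : IsCompact X) (hXΩ : X ⊆ Ω)
    (ρ : EuclideanSpace ℝ (Fin d) → ℝ) (hρc : Continuous ρ) (hρ0 : ∀ x, 0 ≤ ρ x)
    (hρsupp : tsupport ρ ⊆ X) (hρ1 : (∫ x, ρ x) = 1)
    (hGenΩ : ∀ (ψ : Fin N → ℝ) (i j k : Fin N), i ≠ j → i ≠ k → j ≠ k →
      μH[(d : ℝ) - 1] (Gam Ω G ψ i j ∩ Gam Ω G ψ i k) = 0)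
    (hGenX : ∀ (ψ : Fin N → ℝ) (i j : Fin N), i ≠ j →
      μH[(d : ℝ) - 1] (Gam Ω G ψ i j ∩ frontier X) = 0)
    (hpc : IsPathConnected (interior X ∩ {x | 0 < ρ x}))
    (ψ : Fin N → ℝ) (hψ : ∀ i : Fin N, 0 < Hfun Ω G ρ ψ i) :
    Module.finrank ℝ (LinearMap.range (fderiv ℝ (Hfun Ω G ρ) ψ).toLinearMap) = N - 1 ∧
    ((LinearMap.range (fderiv ℝ (Hfun Ω G ρ) ψ).toLinearMap : Submodule ℝ (Fin N → ℝ)) :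
        Set (Fin N → ℝ)) = {v : Fin N → ℝ | ∑ i, v i = 0} ∧
    (∀ w : Fin N → ℝ, w ≠ 0 → fderiv ℝ (Hfun Ω G ρ) ψ w = 0 →
      (∀ i, w i ≠ 0) ∧ ((∀ i, 0 < w i) ∨ (∀ i, w i < 0))) := by
  classical
  obtain ⟨n, rfl⟩ : ∃ n, d = n + 1 := ⟨d - 1, by omega⟩
  have hdim : ((n + 1 : ℕ) : ℝ) - 1 = (n : ℝ) := by push_cast; ring
  rw [hdim] at hGenΩ
  let Fp : Fin N → Fin N → (Fin N → ℝ) × EuclideanSpace ℝ (Fin (n+1)) → ℝ :=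
    fun i l q => G q.2 i (q.1 i) - G q.2 l (q.1 l)
  have hG1 : ∀ i : Fin N, ContDiffOn ℝ 1
      (fun q : (Fin N → ℝ) × EuclideanSpace ℝ (Fin (n+1)) => G q.2 i (q.1 i)) (univ ×ˢ Ω) := by
    intro i
    have h1 : ContDiffOn ℝ 1 (fun q : EuclideanSpace ℝ (Fin (n+1)) × ℝ => G q.1 i q.2) (Ω ×ˢ Set.univ) :=
      (hG2 i).of_le (by norm_num)
    have h2 : ContDiff ℝ 1 (fun q : (Fin N → ℝ) × EuclideanSpace ℝ (Fin (n+1)) => (q.2, q.1 i)) := by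
      fun_prop
    exact h1.comp h2.contDiffOn (fun q hq => ⟨hq.2, trivial⟩)
  have hFcd : ∀ i l, ContDiffOn ℝ 1 (Fp i l) (univ ×ˢ Ω) := fun i l => (hG1 i).sub (hG1 l)
  have hFat : ∀ i l p, ∀ x ∈ Ω, ContDiffAt ℝ 1 (Fp i l) (p, x) := fun i l p x hx =>
    (hFcd i l).contDiffAt ((isOpen_univ.prod hΩo).mem_nhds ⟨trivial, hx⟩)
  have hGc : ∀ (i : Fin N) (v : ℝ), ContinuousOn (fun x => G x i v) Ω := fun i v x hx =>
    (hGx x hx i v).hasFDerivAt.continuousAt.continuousWithinAt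
  have hslice : ∀ i l p, ∀ x ∈ Ω, ∀ v, fderiv ℝ (Fp i l) (p, x) (0, v) =
      fderiv ℝ (fun x => G x i (p i) - G x l (p l)) x v := by
    intro i l p x hx v
    have h1 : HasFDerivAt (Fp i l) (fderiv ℝ (Fp i l) (p, x)) (p, x) :=
      ((hFat i l p x hx).differentiableAt (by norm_num)).hasFDerivAt
    have h2 := h1.comp x (hasFDerivAt_prodMk_right p x)
    have h3 : (fun x => G x i (p i) - G x l (p l)) = Fp i l ∘ (fun x => (p, x)) := rfl
    rw [h3, h2.fderiv]
    simp
  have hgrad : ∀ (i l : Fin N) (p : Fin N → ℝ), ∀ x ∈ Ω, i ≠ l → G x i (p i) = G x l (p l) →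
      ∃ v, fderiv ℝ (fun x => G x i (p i) - G x l (p l)) x v ≠ 0 := by
    intro i l p x hx hil heq
    have h1 := ((hGx x hx i (p i)).hasFDerivAt.sub (hGx x hx l (p l)).hasFDerivAt).fderiv
    by_contra hcon
    push Not at hcon
    have h2 : Gx x i (p i) = Gx x l (p l) := by
      rw [← sub_eq_zero, ← inner_self_eq_zero (𝕜 := ℝ)]
      have h3 := hcon (Gx x i (p i) - Gx x l (p l))
      have h4 : (fun x => G x i (p i) - G x l (p l)) = (fun x => G x i (p i)) - (fun x => G x l (p l)) := rfl
      rw [h4, h1] at h3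
      rw [inner_sub_left]
      simpa using h3
    have h5 := @hTwist x hx (i, p i) (l, p l) (Prod.ext heq h2)
    exact hil (congrArg Prod.fst h5)
  have hnd : ∀ i l p, i ≠ l → ∀ x ∈ Ω, Fp i l (p, x) = 0 → ∃ v, fderiv ℝ (Fp i l) (p, x) (0, v) ≠ 0 := by
    intro i l p hil x hx h0
    obtain ⟨v, hv⟩ := hgrad i l p x hx hil (sub_eq_zero.1 h0)
    exact ⟨v, by rwa [hslice i l p x hx]⟩
  have hties : ∀ (p : Fin N → ℝ) (i l : Fin N), i ≠ l → volume {x | x ∈ Ω ∧ G x i (p i) = G x l (p l)} = 0 := by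
    intro p i l hil
    have := null_ties Ω hΩo (Fp i l) (hFcd i l) p (hnd i l p hil)
    simpa only [Fp, sub_eq_zero] using this
  have hLag : ∀ p i, Lag Ω G p i = {x | x ∈ Ω ∧ ∀ l : {l // l ≠ i}, 0 ≤ Fp i l (p, x)} := by
    intro p i
    ext x
    constructor
    · rintro ⟨h1, h2⟩
      exact ⟨h1, fun l => sub_nonneg.2 (h2 l)⟩
    · rintro ⟨h1, h2⟩
      refine ⟨h1, fun l => ?_⟩
      by_cases hl : l = i
      · rw [hl]
      · exact sub_nonneg.1 (h2 ⟨l, hl⟩)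
  have hLm : ∀ p i, MeasurableSet (Lag Ω G p i) := by
    intro p i
    rw [hLag]
    exact meas_cell Ω hΩo (fun (l : {l // l ≠ i}) x => Fp i l (p, x))
      (fun l => (hGc i (p i)).sub (hGc l (p l)))
  have hρcs : HasCompactSupport ρ := hXc.of_isClosed_subset (isClosed_tsupport ρ) hρsupp
  have hρint : Integrable ρ := hρc.integrable_of_hasCompactSupport hρcs
  let μ : Measure (EuclideanSpace ℝ (Fin (n+1))) := volume.withDensity fun x => ENNReal.ofReal (ρ x)
  have hμuniv : μ univ = 1 := by
    simp only [μ]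
    rw [withDensity_apply _ MeasurableSet.univ, Measure.restrict_univ,
      ← ofReal_integral_eq_lintegral_ofReal hρint (Filter.Eventually.of_forall hρ0), hρ1, ENNReal.ofReal_one]
  have hμp : IsProbabilityMeasure μ := ⟨hμuniv⟩
  have hμac : μ ≪ volume := withDensity_absolutelyContinuous _ _
  have hHμ : ∀ p i, Hfun Ω G ρ p i = μ.real (Lag Ω G p i) := fun p i => rfl
  have hHint : ∀ p i, Hfun Ω G ρ p i = ∫ x in Lag Ω G p i, ρ x := by
    intro p i
    rw [integral_eq_lintegral_of_nonneg_ae (Filter.Eventually.of_forall hρ0)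
      hρc.aestronglyMeasurable, ← withDensity_apply _ (hLm p i)]
    rfl
  have hdiff : DifferentiableAt ℝ (Hfun Ω G ρ) ψ := by
    rw [differentiableAt_pi]
    intro i
    have h1 : (fun p => Hfun Ω G ρ p i) =
        fun p => ∫ x in {x | x ∈ Ω ∧ ∀ l : {l // l ≠ i}, 0 ≤ Fp i l (p, x)}, ρ x := by
      ext p
      rw [hHint, hLag]
    rw [h1]
    refine diff_total Ω hΩo (fun (l : {l // l ≠ i}) => Fp i l) (fun l => hFcd i l) ψ
      (fun l => hnd i l ψ l.2.symm) ?_ ρ hρc hρcs (hρsupp.trans hXΩ)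
    intro l k hlk
    refine measure_mono_null ?_ (hGenΩ ψ i l k l.2.symm k.2.symm (fun h => hlk (Subtype.ext h)))
    rintro x ⟨h1, h2, h3⟩
    exact ⟨⟨h1, sub_eq_zero.1 h2⟩, ⟨h1, sub_eq_zero.1 h3⟩⟩
  have hUopen : IsOpen {x | 0 < ρ x} := isOpen_lt continuous_const hρc
  have hUX : {x | 0 < ρ x} ⊆ X := fun x hx => hρsupp (subset_tsupport ρ (ne_of_gt hx))
  have hUΩ : {x | 0 < ρ x} ⊆ Ω := hUX.trans hXΩ
  have hUpre : IsPreconnected {x | 0 < ρ x} := by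
    have : interior X ∩ {x | 0 < ρ x} = {x | 0 < ρ x} :=
      inter_eq_right.2 (interior_maximal hUX hUopen)
    rw [this] at hpc
    exact hpc.isConnected.isPreconnected
  have hμU : μ {x | 0 < ρ x}ᶜ = 0 := by
    simp only [μ]
    rw [withDensity_apply _ hUopen.measurableSet.compl]
    refine setLIntegral_eq_zero hUopen.measurableSet.compl ?_
    intro x hx
    exact ENNReal.ofReal_eq_zero.2 (not_lt.1 hx)
  have hμΩ : μ Ωᶜ = 0 := measure_mono_null (compl_subset_compl.2 hUΩ) hμU
  have hsum1 : ∀ p, ∑ i, Hfun Ω G ρ p i = 1 := by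
    intro p
    have hdis : Pairwise (Function.onFun (AEDisjoint μ) (fun i => Lag Ω G p i)) := by
      intro i l hil
      refine measure_mono_null ?_ (hμac (hties p i l hil))
      rintro x ⟨h1, h2⟩
      exact ⟨h1.1, le_antisymm (h2.2 i) (h1.2 l)⟩
    have h1 := measure_iUnion₀ hdis (fun i => (hLm p i).nullMeasurableSet)
    have h2 : (⋃ i, Lag Ω G p i) = Ω := by
      ext x
      simp only [mem_iUnion]
      constructor
      · rintro ⟨i, hi⟩
        exact hi.1
      · intro hx
        have : Nonempty (Fin N) := ⟨⟨0, hN⟩⟩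
        obtain ⟨i, hi⟩ := Finite.exists_max (fun i => G x i (p i))
        exact ⟨i, hx, hi⟩
    have h3 : μ Ω = 1 := (prob_compl_eq_zero_iff hΩo.measurableSet).1 hμΩ
    rw [h2, h3, tsum_fintype] at h1
    have h4 : ∑ i, Hfun Ω G ρ p i = (∑ i, μ (Lag Ω G p i)).toReal :=
      (ENNReal.toReal_sum (fun i _ => measure_ne_top μ _)).symm
    rw [h4, ← h1]; simp
  have hdir : ∀ i j, HasDerivAt (fun s : ℝ => Hfun Ω G ρ (ψ + s • Pi.single j 1) i)
      (fderiv ℝ (Hfun Ω G ρ) ψ (Pi.single j 1) i) 0 := by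
    intro i j
    have h1 : HasFDerivAt (Hfun Ω G ρ) (fderiv ℝ (Hfun Ω G ρ) ψ) (ψ + (0:ℝ) • Pi.single j 1) := by
      simpa using hdiff.hasFDerivAt
    have h2 : HasDerivAt (fun s : ℝ => ψ + s • (Pi.single j 1 : Fin N → ℝ)) (Pi.single j 1) 0 := by
      simpa using ((hasDerivAt_id (0:ℝ)).smul_const (Pi.single j 1 : Fin N → ℝ)).const_add ψ
    have h3 := h1.comp_hasDerivAt (0:ℝ) h2
    exact (hasDerivAt_pi.1 h3) i
  have hanti : ∀ x ∈ Ω, ∀ i, Antitone (fun v => G x i v) := by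
    intro x hx i
    refine antitone_of_deriv_nonpos (fun v => (hGv x hx i v).differentiableAt) fun v => ?_
    rw [(hGv x hx i v).deriv]
    exact (hMono x hx i v).le
  have hpj : ∀ (s : ℝ) (j : Fin N), (ψ + s • Pi.single j 1 : Fin N → ℝ) j = ψ j + s := by
    intro s j; simp
  have hpi : ∀ (s : ℝ) (i j : Fin N), i ≠ j → (ψ + s • Pi.single j 1 : Fin N → ℝ) i = ψ i := by
    intro s i j hij; simp [hij]
  have hLagmono : ∀ i j, i ≠ j → ∀ s : ℝ, 0 ≤ s → Lag Ω G ψ i ⊆ Lag Ω G (ψ + s • Pi.single j 1) i := by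
    rintro i j hij s hs x ⟨hx, hk⟩
    refine ⟨hx, fun k => ?_⟩
    rw [hpi s i j hij]
    by_cases hkj : k = j
    · rw [hkj, hpj]
      exact (hanti x hx j (by linarith)).trans (hk j)
    · rw [hpi s k j hkj]
      exact hk k
  have hoff : ∀ i j, i ≠ j → 0 ≤ fderiv ℝ (Hfun Ω G ρ) ψ (Pi.single j 1) i := by
    intro i j hij
    refine deriv_ge _ _ 0 (hdir i j) ?_
    filter_upwards [self_mem_nhdsWithin] with s hs
    have hs' : 0 < s := hs
    simp only [zero_smul, add_zero, zero_mul]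
    rw [hHμ, hHμ]
    exact measureReal_mono (hLagmono i j hij s hs'.le)
  have hpos : ∀ i j, i ≠ j → ∀ x ∈ {x | 0 < ρ x}, G x i (ψ i) = G x j (ψ j) →
      (∀ k, k ≠ i → k ≠ j → G x k (ψ k) < G x i (ψ i)) →
      0 < fderiv ℝ (Hfun Ω G ρ) ψ (Pi.single j 1) i := by
    intro i j hij x0 hx0 heq hoth
    have hx0Ω := hUΩ hx0
    have hx0ρ : 0 < ρ x0 := hx0
    -- neighbourhood
    have e1 : ∀ᶠ q in nhds (x0, ψ j), q.1 ∈ Ω ∧ Gv q.1 j q.2 < Gv x0 j (ψ j) / 2 := by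
      have h1 : ∀ᶠ q in nhds (x0, ψ j), q ∈ Ω ×ˢ (univ : Set ℝ) :=
        (hΩo.prod isOpen_univ).mem_nhds ⟨hx0Ω, trivial⟩
      have h2 : ContinuousAt (fun q : EuclideanSpace ℝ (Fin (n+1)) × ℝ => Gv q.1 j q.2) (x0, ψ j) :=
        (hGvc j).continuousAt ((hΩo.prod isOpen_univ).mem_nhds ⟨hx0Ω, trivial⟩)
      have h3 := h2.eventually_lt_const (show Gv x0 j (ψ j) < Gv x0 j (ψ j) / 2 by
        linarith [hMono x0 hx0Ω j (ψ j)])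
      filter_upwards [h1, h3] with q hq1 hq2
      exact ⟨hq1.1, hq2⟩
    obtain ⟨r, hr, hrq⟩ := Metric.eventually_nhds_iff.1 e1
    have e2 : ∀ᶠ x in nhds x0, ρ x0 / 2 < ρ x :=
      hρc.continuousAt.eventually_const_lt (by linarith)
    have e3 : ∀ᶠ x in nhds x0, ∀ k, k ≠ i → k ≠ j → G x k (ψ k) < G x i (ψ i) := by
      rw [Filter.eventually_all]; intro k
      by_cases hk : k ≠ i ∧ k ≠ j
      · have h1 := (hGc k (ψ k)).continuousAt (hΩo.mem_nhds hx0Ω)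
        have h2 := (hGc i (ψ i)).continuousAt (hΩo.mem_nhds hx0Ω)
        filter_upwards [h1.eventually_lt h2 (hoth k hk.1 hk.2)] with x hx _ _ using hx
      · exact Filter.Eventually.of_forall fun x h1 h2 => absurd ⟨h1, h2⟩ hk
    have e4 : ∀ᶠ x in nhds x0, x ∈ Metric.ball x0 r := Metric.ball_mem_nhds x0 hr
    obtain ⟨W, hWp, hWo, hx0W⟩ := eventually_nhds_iff.1
      ((e2.and e3).and e4)
    have hWΩ : W ⊆ Ω := fun x hx => (@hrq (x, ψ j) (by
      rw [Prod.dist_eq]; exact max_lt (hWp x hx).2 (by simpa using hr))).1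
    obtain ⟨v, hv⟩ := hgrad j i ψ x0 hx0Ω hij.symm heq.symm
    have hfc : ContinuousOn (fun x => G x j (ψ j) - G x i (ψ i)) Ω := (hGc j _).sub (hGc i _)
    have hfcd : ContDiffAt ℝ 1 (fun x => G x j (ψ j) - G x i (ψ i)) x0 := by
      have := (hFat j i ψ x0 hx0Ω).comp (f := fun x => (ψ, x)) x0 (by fun_prop)
      exact this
    obtain ⟨κ, hκ, hκs⟩ := slice_volume W hWo (fun x => G x j (ψ j) - G x i (ψ i)) (hfc.mono hWΩ)
      x0 hx0W hfcd (sub_eq_zero.2 heq.symm) v hv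
    obtain ⟨c, hc0, hc⟩ : ∃ c : ℝ, 0 < c ∧ Gv x0 j (ψ j) / 2 = -c :=
      ⟨-(Gv x0 j (ψ j) / 2), by linarith [hMono x0 hx0Ω j (ψ j)], by ring⟩
    have htend : Filter.Tendsto (fun s : ℝ => c * s) (nhdsWithin 0 (Ioi 0)) (nhdsWithin 0 (Ioi 0)) := by
      refine tendsto_nhdsWithin_of_tendsto_nhds_of_eventually_within _ ?_ ?_
      · have : Filter.Tendsto (fun s : ℝ => c * s) (nhds 0) (nhds (c * 0)) :=
          (continuous_const.mul continuous_id).continuousAt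
        rw [mul_zero] at this
        exact this.mono_left nhdsWithin_le_nhds
      · filter_upwards [self_mem_nhdsWithin] with s hs
        exact mul_pos hc0 hs
    have hκc := htend.eventually hκs
    refine lt_of_lt_of_le (?_ : 0 < ρ x0 / 2 * (κ * c)) (deriv_ge _ _ _ (hdir i j) ?_)
    · positivity
    filter_upwards [hκc, Ioo_mem_nhdsGT hr] with s hs1 hs2
    simp only [zero_smul, add_zero]
    set D := {x | x ∈ W ∧ 0 < G x j (ψ j) - G x i (ψ i) ∧ G x j (ψ j) - G x i (ψ i) ≤ c * s} with hD
    have hDm : MeasurableSet D := by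
      have : D = (W ∩ (fun x => G x j (ψ j) - G x i (ψ i)) ⁻¹' (Ioi 0)) ∩
          (W ∩ (fun x => G x j (ψ j) - G x i (ψ i)) ⁻¹' (Ioi (c * s)))ᶜ := by
        ext x
        simp only [D, mem_ofPred_eq, mem_inter_iff, mem_compl_iff, mem_preimage, mem_Ioi, not_and, not_lt]
        tauto
      rw [this]
      exact ((hfc.mono hWΩ).isOpen_inter_preimage hWo isOpen_Ioi).measurableSet.inter
        ((hfc.mono hWΩ).isOpen_inter_preimage hWo isOpen_Ioi).measurableSet.compl
    have hDsub : D ⊆ Lag Ω G (ψ + s • Pi.single j 1) i := by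
      rintro x ⟨hxW, hx1, hx2⟩
      refine ⟨hWΩ hxW, fun k => ?_⟩
      rw [hpi s i j hij]
      by_cases hkj : k = j
      · rw [hkj, hpj]
        have hmv := Convex.image_sub_le_mul_sub_of_deriv_le (convex_Icc (ψ j) (ψ j + s))
          (f := fun v => G x j v) (C := -c)
          (fun v _ => (hGv x (hWΩ hxW) j v).continuousAt.continuousWithinAt)
          (fun v _ => (hGv x (hWΩ hxW) j v).differentiableAt.differentiableWithinAt)
          (by
            intro v hv
            rw [interior_Icc] at hv
            rw [(hGv x (hWΩ hxW) j v).deriv, ← hc]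
            refine (@hrq (x, v) ?_).2.le
            rw [Prod.dist_eq]
            refine max_lt (hWp x hxW).2 ?_
            rw [Real.dist_eq, abs_lt]
            exact ⟨by linarith [hv.1], by linarith [hv.2, hs2.2]⟩)
          (ψ j) ⟨le_rfl, by linarith [hs2.1]⟩ (ψ j + s) ⟨by linarith [hs2.1], le_rfl⟩
          (by linarith [hs2.1])
        simp only [add_sub_cancel_left] at hmv
        linarith
      · rw [hpi s k j hkj]
        by_cases hki : k = i
        · rw [hki]
        · exact ((hWp x hxW).1.2 k hki hkj).le
    have hDdis : Disjoint (Lag Ω G ψ i) D := by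
      rw [Set.disjoint_left]
      rintro x ⟨-, h1⟩ ⟨-, h2, -⟩
      linarith [h1 j]
    have hDμ : ENNReal.ofReal (ρ x0 / 2 * (κ * c) * s) ≤ μ D := by
      calc ENNReal.ofReal (ρ x0 / 2 * (κ * c) * s)
          = ENNReal.ofReal (ρ x0 / 2) * ((κ : ENNReal) * ENNReal.ofReal (c * s)) := by
            rw [← ENNReal.ofReal_coe_nnreal, ← ENNReal.ofReal_mul κ.coe_nonneg,
              ← ENNReal.ofReal_mul (by positivity)]
            congr 1; ring
        _ ≤ ENNReal.ofReal (ρ x0 / 2) * volume D := mul_le_mul_right hs1 _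
        _ = ∫⁻ _ in D, ENNReal.ofReal (ρ x0 / 2) := by rw [setLIntegral_const]
        _ ≤ ∫⁻ x in D, ENNReal.ofReal (ρ x) := by
            refine setLIntegral_mono' hDm fun x hx => ?_
            exact ENNReal.ofReal_le_ofReal (hWp x hx.1).1.1.le
        _ = μ D := by simp only [μ]; rw [withDensity_apply _ hDm]
    have hDr : ρ x0 / 2 * (κ * c) * s ≤ μ.real D :=
      (ENNReal.ofReal_le_iff_le_toReal (measure_ne_top μ D)).1 hDμ
    rw [hHμ, hHμ]
    calc μ.real (Lag Ω G ψ i) + ρ x0 / 2 * (κ * c) * s ≤ μ.real (Lag Ω G ψ i) + μ.real D := by linarith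
      _ = μ.real (Lag Ω G ψ i ∪ D) := (measureReal_union hDdis hDm).symm
      _ ≤ _ := measureReal_mono (union_subset (hLagmono i j hij s hs2.1.le) hDsub)
  have hirr : ∀ S : Set (Fin N), S.Nonempty → Sᶜ.Nonempty →
      ∃ j ∈ S, ∃ i ∈ Sᶜ, 0 < fderiv ℝ (Hfun Ω G ρ) ψ (Pi.single j 1) i := by
    intro S hS hS'
    obtain ⟨j, hj, i, hi, x, hx, hij, hk⟩ := pure_point {x | 0 < ρ x} hUopen hUpre
      (fun i x => G x i (ψ i)) (fun i => (hGc i (ψ i)).mono hUΩ)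
      (by
        intro i j k hij hik hjk
        refine measure_mono_null ?_ (hGenΩ ψ i j k hij hik hjk)
        rintro x ⟨h1, h2, h3⟩
        exact ⟨⟨hUΩ h1, h2⟩, ⟨hUΩ h1, h3⟩⟩)
      (by
        intro i j hij
        refine measure_mono_null ?_ (hties ψ i j hij)
        rintro x ⟨h1, h2⟩
        exact ⟨hUΩ h1, h2⟩)
      (by
        intro i
        by_contra hcon
        push Not at hcon
        have h0 : μ (Lag Ω G ψ i) = 0 := by
          refine measure_mono_null (t := {x | 0 < ρ x}ᶜ ∪ ⋃ k : Fin N, ⋃ _ : i ≠ k,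
            {x | x ∈ Ω ∧ G x i (ψ i) = G x k (ψ k)}) ?_ ?_
          · rintro x ⟨hx, hmax⟩
            by_cases hxU : x ∈ {x | 0 < ρ x}
            · right
              obtain ⟨k, hk, hle⟩ := hcon x hxU
              simp only [mem_iUnion]
              exact ⟨k, hk.symm, hx, le_antisymm hle (hmax k)⟩
            · exact Or.inl hxU
          · refine measure_union_null hμU ?_
            simp only [measure_iUnion_null_iff]
            exact fun k hk => hμac (hties ψ i k hk)
        have h1 := hψ i
        have h2 : Hfun Ω G ρ ψ i = (μ (Lag Ω G ψ i)).toReal := rfl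
        rw [h2, h0] at h1
        simp at h1)
      S hS hS'
    refine ⟨j, hj, i, hi, hpos i j ?_ x hx hij hk⟩
    rintro rfl
    exact hi hj
  have hsum : ∀ w, ∑ i, fderiv ℝ (Hfun Ω G ρ) ψ w i = 0 := by
    intro w
    have h1 : HasFDerivAt (fun p => ∑ i, Hfun Ω G ρ p i)
        (∑ i, (ContinuousLinearMap.proj i).comp (fderiv ℝ (Hfun Ω G ρ) ψ)) ψ :=
      HasFDerivAt.fun_sum fun i _ => (hasFDerivAt_pi'.1 hdiff.hasFDerivAt) i
    have h2 : (fun p => ∑ i, Hfun Ω G ρ p i) = fun _ => (1:ℝ) := funext hsum1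
    rw [h2] at h1
    have h3 := h1.unique (hasFDerivAt_const (1:ℝ) ψ)
    have h4 := congrArg (fun L => L w) h3
    simpa using h4
  exact laplacian_linalg (fderiv ℝ (Hfun Ω G ρ) ψ).toLinearMap hsum hoff hirr hN
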